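/- arXiv:2405.13893 — 5 statements merged into one kernel-verified Lean document; each statement's English description precedes it below -/
import Mathlib

section
/- Let n ≥ 3. Then D_lir(P_n) = 0 if n is odd and D_lir(P_n) = 1 if n is even. Concretely: if n is odd, the path P_n admits a valid doubling-coloring (D, c) with D = ∅; if n is even, P_n admits a valid doubling-coloring (D, c) with |D| = 1 but admits none with D = ∅. -/
open Finset
open scoped Classical

/-- The weighted degree of vertex `v` in color `i`: each edge incident to `v` colored `i`
counts 2 if it is doubled (lies in `D`) and 1 otherwise. -/
noncomputable def wdeg {V : Type*} [Fintype V] (G : SimpleGraph V)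
    (D : Finset (Sym2 V)) (c : Sym2 V → Fin 2) (i : Fin 2) (v : V) : ℕ :=
  ∑ w ∈ Finset.univ.filter (fun w => G.Adj v w ∧ c s(v, w) = i),
    (if s(v, w) ∈ D then 2 else 1)

/-- `(D, c)` is a valid doubling-coloring of `G`: `D` is a set of edges of `G` and
for every edge `uv` of `G` of color `i`, the weighted `i`-degrees of `u` and `v` differ. -/
def ValidDC {V : Type*} [Fintype V] (G : SimpleGraph V)
    (D : Finset (Sym2 V)) (c : Sym2 V → Fin 2) : Prop :=
  ↑D ⊆ G.edgeSet ∧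
    ∀ u v, G.Adj u v →
      wdeg G D c (c s(u, v)) u ≠ wdeg G D c (c s(u, v)) v

/-!
In a locally irregular graph of maximum degree at most two, every edge joins a vertex of degree two
to a vertex of degree one. The graph is thus bipartite, and counting its edges at the vertices of
degree two shows that there is an even number of them. Without doubled edges, the color classes of
a valid coloring are locally irregular, so `P_n` has an even number `n - 1` of edges.

Conversely, an even number of edges splits into consecutive pairs, colored alternately, each with
degrees `1, 2, 1`. If the number of edges is odd, the first three form one block, and
doubling the first edge gives this block the weighted degrees `2, 3, 2, 1`.
-/

/-- `G` is locally irregular if adjacent vertices have different degrees. This is the property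
that validity without doubled edges imposes on every color class. -/
def IsLocallyIrregular {V : Type*} (G : SimpleGraph V) [G.LocallyFinite] : Prop :=
  ∀ ⦃u v⦄, G.Adj u v → G.degree u ≠ G.degree v

/-- The spanning subgraph of `G` formed by the edges of color `i`; it keeps all the vertices, so
that its degrees are the numbers of incident edges of color `i`. -/
def colorClass {V α : Type*} (G : SimpleGraph V) (c : Sym2 V → α) (i : α) : SimpleGraph V where
  Adj u v := G.Adj u v ∧ c s(u, v) = i
  symm := ⟨fun _ _ h ↦ ⟨h.1.symm, Sym2.eq_swap ▸ h.2⟩⟩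
  loopless := ⟨fun u h ↦ G.loopless.irrefl u h.1⟩

/-- The contribution of an edge `e` to the weighted degree in color `i` of each of its ends:
`2` if it is doubled, `1` if it is not, and `0` if it has another color. -/
noncomputable def edgeWeight {V α : Type*} (D : Finset (Sym2 V)) (c : Sym2 V → α) (i : α)
    (e : Sym2 V) : ℕ :=
  if c e = i then if e ∈ D then 2 else 1 else 0

/-- The contribution to color `i` of the edge `{k - 1, k}` of the path on `Fin n`. It is defined
for every `k`, with value `0` when there is no such edge, so that the two ends of the path need
no separate treatment. -/
noncomputable def pathWeight {n : ℕ} {α : Type*} (D : Finset (Sym2 (Fin n)))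
    (c : Sym2 (Fin n) → α) (i : α) (k : ℕ) : ℕ :=
  if h : 0 < k ∧ k < n then edgeWeight D c i s(⟨k - 1, by omega⟩, ⟨k, h.2⟩) else 0

section ColorClass

variable {V α : Type*} [Fintype V] {G : SimpleGraph V}

lemma wdeg_eq_sum_edgeWeight (D : Finset (Sym2 V)) (c : Sym2 V → Fin 2) (i : Fin 2) (v : V) :
    wdeg G D c i v = ∑ w ∈ G.neighborFinset v, edgeWeight D c i s(v, w) := by
  simp only [wdeg, SimpleGraph.neighborFinset_eq_filter, sum_filter, edgeWeight, ite_and]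
  congr!

lemma IsLocallyIrregular.even_card_edgeFinset (hG : IsLocallyIrregular G)
    (hdeg : ∀ v, G.degree v ≤ 2) : Even #G.edgeFinset := by
  have hpos {u v : V} (h : G.Adj u v) : 0 < G.degree u := (G.degree_pos_iff_exists_adj u).2 ⟨v, h⟩
  have hbip : G.IsBipartiteWith ↑({v | G.degree v = 2} : Finset V)
      ↑({v | G.degree v = 1} : Finset V) := by
    refine ⟨Set.disjoint_left.2 fun v h₂ h₁ ↦ ?_, fun u v h ↦ ?_⟩
    · simp_all
    · have hne := hG h
      have hu : 0 < G.degree u ∧ G.degree u ≤ 2 := ⟨hpos h, hdeg u⟩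
      have hv : 0 < G.degree v ∧ G.degree v ≤ 2 := ⟨hpos h.symm, hdeg v⟩
      simp only [coe_filter, mem_univ, true_and, Set.mem_ofPred_eq]
      omega
  rw [← SimpleGraph.isBipartiteWith_sum_degrees_eq_card_edges hbip]
  exact even_sum _ fun v hv ↦ by simp [(mem_filter.1 hv).2]

lemma degree_colorClass_le (c : Sym2 V → α) (i : α) (v : V) :
    (colorClass G c i).degree v ≤ G.degree v :=
  SimpleGraph.degree_le_of_le fun _ _ h ↦ h.1

lemma sum_card_edgeFinset_colorClass [Fintype α] (c : Sym2 V → α) :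
    ∑ i, #(colorClass G c i).edgeFinset = #G.edgeFinset := by
  rw [card_eq_sum_card_fiberwise fun e _ ↦ mem_coe.2 (mem_univ (c e))]
  refine sum_congr rfl fun i _ ↦ congrArg card ?_
  ext e
  rw [mem_filter, SimpleGraph.mem_edgeFinset, SimpleGraph.mem_edgeFinset]
  induction e with | h u v => rfl

lemma wdeg_empty (c : Sym2 V → Fin 2) (i : Fin 2) (v : V) :
    wdeg G ∅ c i v = (colorClass G c i).degree v := by
  rw [← SimpleGraph.card_neighborFinset_eq_degree, SimpleGraph.neighborFinset_eq_filter, wdeg,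
    card_eq_sum_ones]
  simp only [notMem_empty, if_false, colorClass]
  congr

lemma ValidDC.isLocallyIrregular_colorClass {c : Sym2 V → Fin 2} (h : ValidDC G ∅ c)
    (i : Fin 2) : IsLocallyIrregular (colorClass G c i) := by
  rintro u v ⟨huv, rfl⟩
  simpa only [wdeg_empty] using h.2 u v huv

theorem ValidDC.even_card_edgeFinset {c : Sym2 V → Fin 2} (h : ValidDC G ∅ c)
    (hdeg : ∀ v, G.degree v ≤ 2) : Even #G.edgeFinset := by
  rw [← sum_card_edgeFinset_colorClass c]
  exact even_sum _ fun i _ ↦ (h.isLocallyIrregular_colorClass i).even_card_edgeFinset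
    fun v ↦ (degree_colorClass_le c i v).trans (hdeg v)

end ColorClass

section PathGraph

open SimpleGraph

variable {n : ℕ}

lemma sum_neighborFinset_pathGraph {M : Type*} [AddCommMonoid M] (f : Fin n → M) (v : Fin n) :
    ∑ w ∈ (pathGraph n).neighborFinset v, f w =
      (if h : 0 < v.val then f ⟨v - 1, by omega⟩ else 0) +
        if h : v + 1 < n then f ⟨v + 1, h⟩ else 0 := by
  have hsplit : (pathGraph n).neighborFinset v =
      ({w | w.val + 1 = v} : Finset (Fin n)) ∪ ({w | w.val = v + 1} : Finset (Fin n)) := by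
    ext w
    simp [pathGraph_adj, or_comm, eq_comm]
  rw [hsplit, sum_union (disjoint_filter.2 fun w _ _ ↦ by omega)]
  congr 1
  · split_ifs with h
    · convert sum_singleton f ⟨v - 1, by omega⟩
      ext w
      simp only [mem_filter, mem_univ, true_and, mem_singleton, Fin.ext_iff]
      omega
    · exact sum_eq_zero fun w hw ↦ by have := (mem_filter.1 hw).2; omega
  · split_ifs with h
    · convert sum_singleton f ⟨v + 1, h⟩
      ext w
      simp only [mem_filter, mem_univ, true_and, mem_singleton, Fin.ext_iff]
    · exact sum_eq_zero fun w hw ↦ by have := (mem_filter.1 hw).2; omega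

lemma degree_pathGraph_le_two (v : Fin n) : (pathGraph n).degree v ≤ 2 := by
  rw [← card_neighborFinset_eq_degree, card_eq_sum_ones, sum_neighborFinset_pathGraph]
  split_ifs <;> simp

lemma card_edgeFinset_pathGraph_succ (n : ℕ) : #(pathGraph (n + 1)).edgeFinset = n := by
  have hedges : (pathGraph (n + 1)).edgeFinset =
      univ.image fun i : Fin n ↦ s(i.castSucc, i.succ) := by
    ext e
    induction e with | h u v => ?_
    simp only [mem_edgeFinset, mem_edgeSet, pathGraph_adj, mem_image, mem_univ, true_and,
      Sym2.eq_iff, Fin.ext_iff, Fin.val_castSucc, Fin.val_succ]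
    constructor
    · rintro (h | h)
      · exact ⟨⟨u, by omega⟩, .inl ⟨rfl, h⟩⟩
      · exact ⟨⟨v, by omega⟩, .inr ⟨rfl, h⟩⟩
    · rintro ⟨i, hi⟩
      omega
  have hinj : Function.Injective fun i : Fin n ↦ s(i.castSucc, i.succ) := fun i j h ↦ by
    simp only [Sym2.eq_iff, Fin.ext_iff, Fin.val_castSucc, Fin.val_succ] at h
    omega
  rw [hedges, card_image_of_injective _ hinj, card_fin]

lemma wdeg_pathGraph (D : Finset (Sym2 (Fin n))) (c : Sym2 (Fin n) → Fin 2) (i : Fin 2)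
    (v : Fin n) :
    wdeg (pathGraph n) D c i v = pathWeight D c i v + pathWeight D c i (v + 1) := by
  rw [wdeg_eq_sum_edgeWeight, sum_neighborFinset_pathGraph]
  simp [pathWeight, Sym2.eq_swap]

-- The edge `{k, k + 1}` contributes equally at both of its ends, so only the edges on either
-- side of it are compared.
lemma validDC_pathGraph_iff {D : Finset (Sym2 (Fin n))} {c : Sym2 (Fin n) → Fin 2} :
    ValidDC (pathGraph n) D c ↔ ↑D ⊆ (pathGraph n).edgeSet ∧
      ∀ k (hk : k + 1 < n), pathWeight D c (c s(⟨k, by omega⟩, ⟨k + 1, hk⟩)) k ≠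
        pathWeight D c (c s(⟨k, by omega⟩, ⟨k + 1, hk⟩)) (k + 2) := by
  refine and_congr_right fun _ ↦ ⟨fun h k hk ↦ ?_, fun h u v huv ↦ ?_⟩
  · have := h ⟨k, by omega⟩ ⟨k + 1, hk⟩ (pathGraph_adj.2 (.inl rfl))
    simp only [wdeg_pathGraph, add_assoc, Nat.reduceAdd] at this
    omega
  · wlog hlt : u.val + 1 = v generalizing u v
    · rw [Sym2.eq_swap]
      exact (this v u huv.symm ((pathGraph_adj.1 huv).resolve_left hlt)).symm
    obtain ⟨v, hv⟩ := v
    obtain rfl := hlt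
    have := h u hv
    simp only [wdeg_pathGraph, Fin.eta, add_assoc, Nat.reduceAdd] at this ⊢
    omega

/-- The coloring `0, 0, 1, 1, 0, 0, 1, 1, …` of the natural numbers. The edge `{k - 1, k}` of a path
is identified by its larger end `k`, and is colored by `blockColor` of a shift of `k`. -/
def blockColor (k : ℕ) : Fin 2 := Fin.ofNat 2 (k / 2)

lemma blockColor_succ_eq_iff {k : ℕ} : blockColor (k + 1) = blockColor k ↔ Even k := by
  simp only [blockColor, Fin.ext_iff, Fin.val_ofNat, Nat.even_iff]
  omega

lemma blockColor_eq_succ_iff {k : ℕ} : blockColor k = blockColor (k + 1) ↔ Even k := by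
  rw [eq_comm, blockColor_succ_eq_iff]

lemma validDC_pathGraph_of_odd (hn : Odd n) :
    ValidDC (pathGraph n) ∅ fun e ↦ blockColor (e.sup.val - 1) := by
  refine validDC_pathGraph_iff.2 ⟨by simp, fun k hk ↦ ?_⟩
  rcases k with _ | k
  · have hlt : 2 < n := by grind
    simp [pathWeight, edgeWeight, blockColor_succ_eq_iff, hlt]
  by_cases hkeven : Even k
  · simp [pathWeight, edgeWeight, blockColor_succ_eq_iff, blockColor_eq_succ_iff, hkeven,
      Nat.even_add_one, Nat.lt_of_succ_lt hk]
  · have hlt : k + 3 < n := by grind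
    simp [pathWeight, edgeWeight, blockColor_succ_eq_iff, blockColor_eq_succ_iff, hkeven,
      Nat.even_add_one, Nat.lt_of_succ_lt hk, hlt]

-- Truncated subtraction sends `1` and `2` to `0`, so the first block consists of the three edges
-- with larger ends `1`, `2`, `3`.
lemma validDC_pathGraph_of_even (hn : Even n) (hn3 : 3 ≤ n) :
    ValidDC (pathGraph n) {s(⟨0, by omega⟩, ⟨1, by omega⟩)}
      fun e ↦ blockColor (e.sup.val - 2) := by
  refine validDC_pathGraph_iff.2 ⟨by simp [pathGraph_adj], fun k hk ↦ ?_⟩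
  rcases k with _ | _ | k
  · have hlt : 2 < n := hn3
    simp [pathWeight, edgeWeight, hlt]
  · have hlt : 3 < n := by grind
    simp [pathWeight, edgeWeight, blockColor_succ_eq_iff, Nat.lt_of_succ_lt hk, hlt]
  by_cases hkeven : Even k
  · simp [pathWeight, edgeWeight, blockColor_succ_eq_iff, blockColor_eq_succ_iff, hkeven,
      Nat.even_add_one, Nat.lt_of_succ_lt hk]
  · have hlt : k + 4 < n := by grind
    simp [pathWeight, edgeWeight, blockColor_succ_eq_iff, blockColor_eq_succ_iff, hkeven,
      Nat.even_add_one, Nat.lt_of_succ_lt hk, hlt]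

lemma even_of_validDC_pathGraph_succ {m : ℕ} {c : Sym2 (Fin (m + 1)) → Fin 2}
    (h : ValidDC (pathGraph (m + 1)) ∅ c) : Even m :=
  card_edgeFinset_pathGraph_succ m ▸ h.even_card_edgeFinset degree_pathGraph_le_two

end PathGraph

/-- For `n ≥ 3`: if `n` is odd the path `P_n` admits a valid doubling-coloring with no
doubled edge; if `n` is even, it admits one with exactly one doubled edge but none with
no doubled edge. -/
theorem Dlir_pathGraph (n : ℕ) (hn : 3 ≤ n) :
    (Odd n → ∃ c : Sym2 (Fin n) → Fin 2,
        ValidDC (SimpleGraph.pathGraph n) (∅ : Finset (Sym2 (Fin n))) c) ∧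
    (Even n →
      (∃ (D : Finset (Sym2 (Fin n))) (c : Sym2 (Fin n) → Fin 2),
          ValidDC (SimpleGraph.pathGraph n) D c ∧ D.card = 1) ∧
      ¬ ∃ c : Sym2 (Fin n) → Fin 2,
          ValidDC (SimpleGraph.pathGraph n) (∅ : Finset (Sym2 (Fin n))) c) := by
  refine ⟨fun hodd ↦ ⟨_, validDC_pathGraph_of_odd hodd⟩,
    fun heven ↦ ⟨⟨_, _, validDC_pathGraph_of_even heven hn, card_singleton _⟩, ?_⟩⟩
  rintro ⟨c, hc⟩
  obtain ⟨m, rfl⟩ : ∃ m, n = m + 1 := ⟨n - 1, by omega⟩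
  exact Nat.even_add_one.1 heven (even_of_validDC_pathGraph_succ hc)
end

section
/- If T is a tree of order at least three, then D_lir(T) ≤ 1; that is, T admits a valid doubling-coloring (D, c) with |D| ≤ 1. -/
open Finset
open scoped Classical

/-!
Root the tree at a leaf `r`. At every other vertex, each edge to a child either keeps the color of
the parent edge or flips to the other one. Processing the tree from the leaves towards the root, the
weighted degree of each child in the color of its parent edge is already known, and a vertex only
has to split its `k` children so that no child edge joins two equal weighted degrees in its color.
If the parent edge has weight `w`, flipping `s ≤ k / 2` edges is possible unless more than `s`
children have degree `s` or `k - s + w`. These exceptional sets are disjoint for distinct `s`, so if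
`k ≥ 4` they cannot all be this large: those for `s = 0`, `k / 2 - 1` and `k / 2` would contain more
than `k` children. The cases `k ≤ 3` are settled by hand.

At the edge `ur` the leaf `r` has degree `w`, so `u` must also keep the color on some child edge.
This could only fail when `u` has a single child, of degree `1 + w`, and choosing `w` between `1`
and `2`, that is, possibly doubling `ur`, avoids that.
-/

section Split

variable {ι : Type*} {S : Finset ι} {a : ι → ℕ} {w s t : ℕ}

/-- The local constraint at a vertex whose children form `S`: the edges to the children in `B` get
the other color than the parent edge, those to `S \ B` keep it. Here `a i` is the weighted degree of
the child `i` in the color of its edge to the vertex, and `w` is the weight of the parent edge, so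
that the vertex has weighted degrees `#B` and `#(S \ B) + w` in the two colors. -/
structure IsSplit (S : Finset ι) (a : ι → ℕ) (w : ℕ) (B : Finset ι) : Prop where
  subset : B ⊆ S
  ne_card : ∀ i ∈ B, a i ≠ #B
  ne_card_sdiff_add : ∀ i ∈ S \ B, a i ≠ #(S \ B) + w

theorem IsSplit.congr {a' : ι → ℕ} {B : Finset ι} (hB : IsSplit S a w B)
    (h : ∀ i ∈ S, a i = a' i) : IsSplit S a' w B where
  subset := hB.subset
  ne_card i hi := h i (hB.subset hi) ▸ hB.ne_card i hi
  ne_card_sdiff_add i hi := h i (sdiff_subset hi) ▸ hB.ne_card_sdiff_add i hi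

theorem exists_isSplit_card_eq (hs : s ≤ #S) (hne : ∀ i ∈ S, a i = s → a i ≠ #S - s + w)
    (hle : #{i ∈ S | a i = s} ≤ #S - s) (hge : #{i ∈ S | a i = #S - s + w} ≤ s) :
    ∃ B, IsSplit S a w B ∧ #B = s := by
  have hsub : {i ∈ S | a i = #S - s + w} ⊆ S \ {i ∈ S | a i = s} := by grind
  have hcard : s ≤ #(S \ {i ∈ S | a i = s}) := by
    rw [card_sdiff_of_subset (filter_subset _ _)]
    omega
  obtain ⟨B, hforced, hallowed, rfl⟩ := exists_subsuperset_card_eq hsub hge hcard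
  have hBS : B ⊆ S := hallowed.trans sdiff_subset
  refine ⟨B, ⟨hBS, by grind, fun i hi hai ↦ ?_⟩, rfl⟩
  rw [card_sdiff_of_subset hBS] at hai
  exact (mem_sdiff.1 hi).2 (hforced (mem_filter.2 ⟨(mem_sdiff.1 hi).1, hai⟩))

/-- The elements restricting which `B` of cardinality `s` satisfy `IsSplit S a w B`: those with
`a i = s` must stay outside `B`, those with `a i = #S - s + w` must lie in `B`. -/
def splitConflicts (S : Finset ι) (a : ι → ℕ) (w s : ℕ) : Finset ι :=
  {i ∈ S | a i = s ∨ a i = #S - s + w}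

theorem exists_isSplit_of_card_splitConflicts_le (hw : w ≠ 0) (hs : s ≤ #S / 2)
    (hconf : #(splitConflicts S a w s) ≤ s) : ∃ B, IsSplit S a w B ∧ #B = s := by
  have hle : #{i ∈ S | a i = s} ≤ s :=
    (card_le_card (monotone_filter_right S fun _ _ ↦ Or.inl)).trans hconf
  have hge : #{i ∈ S | a i = #S - s + w} ≤ s :=
    (card_le_card (monotone_filter_right S fun _ _ ↦ Or.inr)).trans hconf
  exact exists_isSplit_card_eq (by omega) (by omega) (by omega) hge

theorem disjoint_splitConflicts (hw : w ≠ 0) (hs : s ≤ #S / 2) (ht : t ≤ #S / 2) (hst : s ≠ t) :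
    Disjoint (splitConflicts S a w s) (splitConflicts S a w t) := by
  have hw_pos := Nat.pos_of_ne_zero hw
  exact disjoint_filter.2 fun _ _ ↦ by omega

theorem exists_card_splitConflicts_le (a : ι → ℕ) (hw : w ≠ 0) (hS : 1 < #S) (hS3 : #S ≠ 3) :
    ∃ s ≤ #S / 2, #(splitConflicts S a w s) ≤ s := by
  by_contra! hlt
  obtain ⟨m, hm⟩ : ∃ m, m = #S / 2 := ⟨_, rfl⟩
  rw [← hm] at hlt
  set C := splitConflicts S a w
  have hmid : #(C (m - 1) ∪ C m) = #(C (m - 1)) + #(C m) :=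
    card_union_of_disjoint (disjoint_splitConflicts hw (by omega) (by omega) (by omega))
  have hsub (s : ℕ) : C s ⊆ S := filter_subset _ _
  have hmid_le : #(C (m - 1) ∪ C m) ≤ #S := card_le_card (union_subset (hsub _) (hsub _))
  have hlt_pred := hlt (m - 1) (by omega)
  have hlt_m := hlt m le_rfl
  have hm_two : 2 ≤ m := by omega
  have hzero : Disjoint (C 0) (C (m - 1) ∪ C m) := disjoint_union_right.2
    ⟨disjoint_splitConflicts hw (by omega) (by omega) (by omega),
      disjoint_splitConflicts hw (by omega) (by omega) (by omega)⟩
  have hall_le : #(C 0) + #(C (m - 1) ∪ C m) ≤ #S := by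
    rw [← card_union_of_disjoint hzero]
    exact card_le_card (union_subset (hsub _) (union_subset (hsub _) (hsub _)))
  have hlt_zero := hlt 0 (by omega)
  omega

theorem exists_isSplit_card_lt_of_card_eq_three (a : ι → ℕ) (hw : w ≠ 0) (hS : #S = 3) :
    ∃ B, IsSplit S a w B ∧ #B < #S := by
  by_cases hconf : ∃ s ≤ #S / 2, #(splitConflicts S a w s) ≤ s
  · obtain ⟨s, hs, hle⟩ := hconf
    obtain ⟨B, hB, rfl⟩ := exists_isSplit_of_card_splitConflicts_le hw hs hle
    exact ⟨B, hB, by omega⟩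
  push Not at hconf
  have hcover : splitConflicts S a w 0 ∪ splitConflicts S a w 1 = S := by
    refine eq_of_subset_of_card_le (union_subset (filter_subset _ _) (filter_subset _ _)) ?_
    rw [card_union_of_disjoint (disjoint_splitConflicts hw (by omega) (by omega) (by omega))]
    have hlt_zero := hconf 0 (by omega)
    have hlt_one := hconf 1 (by omega)
    omega
  have hfree : ∀ i ∈ S, a i ≠ 2 ∧ a i ≠ #S - 2 + w := by
    intro i hi
    rw [← hcover] at hi
    simp only [splitConflicts, mem_union, mem_filter] at hi
    omega
  obtain ⟨B, hB, hcard⟩ := exists_isSplit_card_eq (s := 2) (by omega)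
    (fun i hi _ ↦ (hfree i hi).2)
    (by simp [filter_false_of_mem fun i hi ↦ (hfree i hi).1])
    (by simp [filter_false_of_mem fun i hi ↦ (hfree i hi).2])
  exact ⟨B, hB, by omega⟩

theorem exists_isSplit_card_lt (a : ι → ℕ) (hw : w ≠ 0) (hS : 1 < #S) :
    ∃ B, IsSplit S a w B ∧ #B < #S := by
  by_cases hS3 : #S = 3
  · exact exists_isSplit_card_lt_of_card_eq_three a hw hS3
  · obtain ⟨s, hs, hconf⟩ := exists_card_splitConflicts_le a hw hS hS3
    obtain ⟨B, hB, rfl⟩ := exists_isSplit_of_card_splitConflicts_le hw hs hconf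
    exact ⟨B, hB, by omega⟩

theorem isSplit_singleton_empty {i : ι} (hi : a i ≠ 1 + w) : IsSplit {i} a w ∅ :=
  ⟨empty_subset _, by simp, by simpa using hi⟩

theorem exists_isSplit (S : Finset ι) (a : ι → ℕ) (hw : w ≠ 0) : ∃ B, IsSplit S a w B := by
  rcases S.eq_empty_or_nonempty with rfl | hS
  · exact ⟨∅, by simp, by simp, by simp⟩
  rcases (Nat.succ_le_of_lt hS.card_pos).eq_or_lt' with hS | hS
  · obtain ⟨i, rfl⟩ := card_eq_one.1 hS
    by_cases hi : a i = 1 + w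
    · exact ⟨{i}, by simp, by simp; omega, by simp⟩
    · exact ⟨∅, isSplit_singleton_empty hi⟩
  · exact (exists_isSplit_card_lt a hw hS).imp fun _ ↦ And.left

theorem exists_isSplit_nonempty_sdiff (a : ι → ℕ) (hS : S.Nonempty) :
    ∃ w, (w = 1 ∨ w = 2) ∧ ∃ B, IsSplit S a w B ∧ (S \ B).Nonempty := by
  rcases (Nat.succ_le_of_lt hS.card_pos).eq_or_lt' with hS | hS
  · obtain ⟨i, rfl⟩ := card_eq_one.1 hS
    by_cases hi : a i = 1 + 1
    · exact ⟨2, Or.inr rfl, ∅, isSplit_singleton_empty (by omega), by simp⟩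
    · exact ⟨1, Or.inl rfl, ∅, isSplit_singleton_empty hi, by simp⟩
  · obtain ⟨B, hB, hlt⟩ := exists_isSplit_card_lt a one_ne_zero hS
    exact ⟨1, Or.inl rfl, B, hB, sdiff_nonempty.2 fun h ↦ hlt.not_ge (card_le_card h)⟩

end Split

theorem exists_forall_of_wellFounded {α β : Type*} [Nonempty β] {R : α → α → Prop}
    (hR : WellFounded R) {P : α → (α → β) → β → Prop} (hex : ∀ x f, ∃ b, P x f b)
    (hcongr : ∀ x f g b, (∀ y, R y x → f y = g y) → P x f b → P x g b) :
    ∃ f : α → β, ∀ x, P x f (f x) := by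
  choose F hF using hex
  let extend (x : α) (rec : ∀ y, R y x → β) : α → β :=
    fun y ↦ if h : R y x then rec y h else Classical.arbitrary β
  let f : α → β := hR.fix fun x rec ↦ F x (extend x rec)
  have hf (x : α) : f x = F x (extend x fun y _ ↦ f y) := hR.fix_eq _ x
  refine ⟨f, fun x ↦ ?_⟩
  rw [hf x]
  exact hcongr x _ f _ (fun y hy ↦ dif_pos hy) (hF x _)

/-- The number of parallel copies of the edge `e` once the edges of `D` are doubled; this is the
summand of `wdeg`. -/
noncomputable def edgeMult {V : Type*} (D : Finset (Sym2 V)) (e : Sym2 V) : ℕ :=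
  if e ∈ D then 2 else 1

theorem edgeMult_of_notMem {V : Type*} {D : Finset (Sym2 V)} {e : Sym2 V} (he : e ∉ D) :
    edgeMult D e = 1 :=
  if_neg he

section Graph

variable {V : Type*} {T : SimpleGraph V} {r v : V}

theorem existsUnique_adj_dist_eq_add_one (hT : T.IsTree) (hv : v ≠ r) :
    ∃! w, T.Adj v w ∧ T.dist r v = T.dist r w + 1 := by
  simp only [T.dist_comm (u := r)]
  obtain ⟨P, hP, hlen⟩ := hT.connected.exists_path_of_dist v r
  have hnil : ¬ P.Nil := fun h ↦ hv h.eq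
  have hsnd : T.dist v r = T.dist P.snd r + 1 := by
    have htail := T.dist_le P.tail
    have hlen_tail := P.length_tail_add_one hnil
    have hdist := hT.dist_eq_dist_add_one_of_adj r (P.adj_snd hnil)
    simp only [T.dist_comm (u := r)] at hdist
    omega
  refine ⟨P.snd, ⟨P.adj_snd hnil, hsnd⟩, fun w ⟨hw, hdist⟩ ↦ ?_⟩
  obtain ⟨Q, hQ⟩ := hT.connected.exists_walk_length_eq_dist w r
  have hcons : (SimpleGraph.Walk.cons hw Q).IsPath :=
    SimpleGraph.Walk.isPath_of_length_eq_dist _ (by simp [hQ, hdist])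
  have hPQ : SimpleGraph.Walk.cons hw Q = P := (hT.existsUnique_path v r).unique hcons hP
  simp [← hPQ]

theorem exists_adj_ne_of_forall_adj_eq [Fintype V] {u : V} (hT : T.Preconnected)
    (hV : 3 ≤ Fintype.card V) (hr : ∀ v, T.Adj r v → v = u) : ∃ v ≠ r, T.Adj u v := by
  obtain ⟨z, hz⟩ := exists_mem_notMem_of_card_lt_card (s := {r, u}) (t := univ)
    (card_le_two.trans_lt hV)
  obtain ⟨walk⟩ := hT r z
  obtain ⟨d, -, hfst, hsnd⟩ := walk.exists_boundary_dart {r, u} (by simp) (by simpa using hz)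
  simp only [Set.mem_insert_iff, Set.mem_singleton_iff, not_or] at hfst hsnd
  rcases hfst with hfst | hfst
  · exact absurd (hr _ (hfst ▸ d.adj)) hsnd.2
  · exact ⟨d.snd, hsnd.1, hfst ▸ d.adj⟩

/-- `p` sends every vertex of the tree `T`, rooted at `r`, to its parent. The value `p r` at the
root is arbitrary. -/
structure IsParentMap (T : SimpleGraph V) (r : V) (p : V → V) : Prop where
  adj : ∀ v ≠ r, T.Adj v (p v)
  dist_eq : ∀ v ≠ r, T.dist r v = T.dist r (p v) + 1
  eq_or_eq_of_adj : ∀ v w, T.Adj v w → v ≠ r ∧ p v = w ∨ w ≠ r ∧ p w = v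

theorem exists_isParentMap (hT : T.IsTree) (r : V) : ∃ p, IsParentMap T r p := by
  have hex (v : V) : ∃ w, v ≠ r → T.Adj v w ∧ T.dist r v = T.dist r w + 1 := by
    by_cases hv : v = r
    · exact ⟨v, fun h ↦ absurd hv h⟩
    · exact (existsUnique_adj_dist_eq_add_one hT hv).exists.imp fun _ h _ ↦ h
  choose p hp using hex
  have hparent {v w : V} (hvw : T.Adj v w) (hdist : T.dist r v = T.dist r w + 1) :
      v ≠ r ∧ p v = w := by
    have hv : v ≠ r := by rintro rfl; simp at hdist
    exact ⟨hv, (existsUnique_adj_dist_eq_add_one hT hv).unique (hp v hv) ⟨hvw, hdist⟩⟩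
  refine ⟨p, fun v hv ↦ (hp v hv).1, fun v hv ↦ (hp v hv).2, fun v w hvw ↦ ?_⟩
  exact (hT.dist_eq_dist_add_one_of_adj r hvw).imp (hparent hvw) (hparent hvw.symm)

/-- The children of `v` for the parent map `p` with root `r`. The root is excluded explicitly
because `p r` is arbitrary. -/
noncomputable def children [Fintype V] (p : V → V) (r v : V) : Finset V :=
  {w | w ≠ r ∧ p w = v}

variable {p : V → V}

theorem mem_children [Fintype V] {w : V} : w ∈ children p r v ↔ w ≠ r ∧ p w = v := by
  simp [children]

/-- The edge coloring `c` changes between the parent edges of `v` and of `p v` exactly when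
`v ∈ F`. -/
def IsFlipColoring (p : V → V) (r : V) (F : Set V) (c : Sym2 V → Fin 2) : Prop :=
  ∀ v ≠ r, p v ≠ r → (c s(v, p v) = c s(p v, p (p v)) ↔ v ∉ F)

namespace IsParentMap

theorem injective_parentEdge (hp : IsParentMap T r p) :
    Function.Injective fun v : {v // v ≠ r} ↦ s((v : V), p v) := by
  rintro ⟨v, hv⟩ ⟨w, hw⟩ h
  rcases Sym2.eq_iff.1 h with ⟨hvw, -⟩ | ⟨hv_eq, hw_eq⟩
  · exact Subtype.ext hvw
  · have hdist_v := hp.dist_eq v hv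
    have hdist_w := hp.dist_eq w hw
    grind

theorem parentEdge_eq_iff (hp : IsParentMap T r p) {w : V} (hv : v ≠ r) (hw : w ≠ r) :
    s(v, p v) = s(w, p w) ↔ v = w := by
  simpa using hp.injective_parentEdge.eq_iff (a := ⟨v, hv⟩) (b := ⟨w, hw⟩)

theorem exists_isFlipColoring (hp : IsParentMap T r p) (F : Set V) :
    ∃ c, IsFlipColoring p r F c := by
  -- The color of a parent edge is the parity of the number of flips on the path to the root.
  let flip (v : V) : Fin 2 := if v ∈ F then 1 else 0
  let col (v : V) : Fin 2 := ∑ k ∈ range (T.dist r v), flip (p^[k] v)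
  let c : Sym2 V → Fin 2 :=
    Function.extend (fun v : {v // v ≠ r} ↦ s((v : V), p v)) (fun v ↦ col v) 0
  have hc (v : V) (hv : v ≠ r) : c s(v, p v) = col v :=
    hp.injective_parentEdge.extend_apply _ _ ⟨v, hv⟩
  refine ⟨c, fun v hv hpv ↦ ?_⟩
  have hcol : col v = col (p v) + flip v := by
    simp only [col, hp.dist_eq v hv, sum_range_succ', Function.iterate_succ_apply,
      Function.iterate_zero_apply]
  rw [hc v hv, hc (p v) hpv, hcol, add_eq_left]
  simp [flip]

section Finite

variable [Fintype V]

theorem wellFounded_mem_children (hp : IsParentMap T r p) :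
    WellFounded fun w v ↦ w ∈ children p r v := by
  have : IsTrans V fun w v ↦ T.dist r v < T.dist r w := ⟨fun _ _ _ h h' ↦ h'.trans h⟩
  have : Std.Irrefl fun w v : V ↦ T.dist r v < T.dist r w := ⟨fun _ ↦ lt_irrefl _⟩
  refine Subrelation.wf (fun {w v} hw ↦ ?_)
    (Finite.wellFounded_of_trans_of_irrefl fun w v ↦ T.dist r v < T.dist r w)
  obtain ⟨hwr, rfl⟩ := mem_children.1 hw
  rw [hp.dist_eq w hwr]
  exact Nat.lt_succ_self _

theorem filter_adj_root (hp : IsParentMap T r p) :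
    ({w | T.Adj r w} : Finset V) = children p r r := by
  ext w
  simp only [mem_filter, mem_univ, true_and, mem_children]
  refine ⟨fun hw ↦ ?_, fun ⟨hw, hpw⟩ ↦ (hpw ▸ hp.adj w hw).symm⟩
  simpa using hp.eq_or_eq_of_adj r w hw

theorem filter_adj (hp : IsParentMap T r p) (hv : v ≠ r) :
    ({w | T.Adj v w} : Finset V) = insert (p v) (children p r v) := by
  ext w
  simp only [mem_filter, mem_univ, true_and, mem_insert, mem_children]
  constructor
  · exact fun hw ↦ (hp.eq_or_eq_of_adj v w hw).imp_left fun h ↦ h.2.symm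
  · rintro (rfl | ⟨hw, rfl⟩)
    exacts [hp.adj v hv, (hp.adj w hw).symm]

theorem parent_notMem_children (hp : IsParentMap T r p) (hv : v ≠ r) :
    p v ∉ children p r v := by
  intro h
  obtain ⟨hpv, hppv⟩ := mem_children.1 h
  have hdist := hp.dist_eq v hv
  have hdist_parent := hp.dist_eq (p v) hpv
  rw [hppv] at hdist_parent
  omega

variable {D : Finset (Sym2 V)} {c : Sym2 V → Fin 2} {i : Fin 2} {u : V}

theorem wdeg_eq_sum_children (hp : IsParentMap T r p) (hv : v ≠ r) :
    wdeg T D c i v = (∑ w ∈ children p r v with c s(v, w) = i, edgeMult D s(v, w)) +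
      if c s(v, p v) = i then edgeMult D s(v, p v) else 0 := by
  simp only [wdeg, edgeMult, ← filter_filter, hp.filter_adj hv, sum_filter,
    sum_insert (hp.parent_notMem_children hv)]
  rw [add_comm]

theorem wdeg_eq_card_children (hp : IsParentMap T r p) (hv : v ≠ r)
    (hD : ∀ w ∈ children p r v, s(v, w) ∉ D) :
    wdeg T D c i v = #{w ∈ children p r v | c s(v, w) = i} +
      if c s(v, p v) = i then edgeMult D s(v, p v) else 0 := by
  rw [hp.wdeg_eq_sum_children hv, card_eq_sum_ones]
  congr 1
  exact sum_congr rfl fun w hw ↦ edgeMult_of_notMem (hD w (mem_filter.1 hw).1)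

theorem wdeg_root (hp : IsParentMap T r p) (hr : children p r r = {u}) :
    wdeg T D c (c s(u, r)) r = edgeMult D s(u, r) := by
  simp only [wdeg, edgeMult, ← filter_filter, hp.filter_adj_root, hr, sum_filter, sum_singleton,
    Sym2.eq_swap (a := r), if_true]

theorem wdeg_parentEdge_color (hp : IsParentMap T r p) (hv : v ≠ r)
    (hD : ∀ w ∈ children p r v, s(v, w) ∉ D) {B : Finset V}
    (hc : ∀ w ∈ children p r v, c s(v, w) = c s(v, p v) ↔ w ∉ B) :
    wdeg T D c (c s(v, p v)) v = #(children p r v \ B) + edgeMult D s(v, p v) := by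
  rw [hp.wdeg_eq_card_children hv hD, if_pos rfl, sdiff_eq_filter, filter_congr hc]

theorem wdeg_of_ne_parentEdge_color (hp : IsParentMap T r p) (hv : v ≠ r)
    (hD : ∀ w ∈ children p r v, s(v, w) ∉ D) {B : Finset V} (hB : B ⊆ children p r v)
    (hc : ∀ w ∈ children p r v, c s(v, w) = c s(v, p v) ↔ w ∉ B) (hi : i ≠ c s(v, p v)) :
    wdeg T D c i v = #B := by
  have hflip : ∀ w ∈ children p r v, c s(v, w) = i ↔ w ∈ B := fun w hw ↦ by
    rw [← not_iff_not, ← hc w hw]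
    omega
  rw [hp.wdeg_eq_card_children hv hD, if_neg hi.symm, add_zero, filter_congr hflip,
    filter_mem_eq_inter, inter_eq_right.2 hB]

end Finite

end IsParentMap

variable [Fintype V] {p : V → V} {u : V} {D : Finset (Sym2 V)} {c : Sym2 V → Fin 2}
  {B : V → Finset V}

/-- A compatible choice of splits `B v` at all vertices other than the root: the weighted degree of
a child `w` in the color of its parent edge is `#(children p r w \ B w)` plus the multiplicity of
that edge, which is `1` as only the edge at the root may be doubled. -/
def IsSplitSystem (p : V → V) (r : V) (D : Finset (Sym2 V)) (B : V → Finset V) : Prop :=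
  ∀ v ≠ r, IsSplit (children p r v) (fun w ↦ #(children p r w \ B w) + 1)
    (edgeMult D s(v, p v)) (B v)

theorem IsParentMap.exists_isSplitSystem (hp : IsParentMap T r p) (hur : u ≠ r) (hpu : p u = r)
    (hu : (children p r u).Nonempty) :
    ∃ D ⊆ {s(u, r)}, ∃ B, IsSplitSystem p r D B ∧ (children p r u \ B u).Nonempty := by
  let IsChoice (v : V) (f : V → Finset V) (b : Finset V) : Prop :=
    ∃ m, (m = 1 ∨ v = u ∧ m = 2) ∧ (v = u → (children p r v \ b).Nonempty) ∧
      IsSplit (children p r v) (fun w ↦ #(children p r w \ f w) + 1) m b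
  have hex (v : V) (f : V → Finset V) : ∃ b, IsChoice v f b := by
    by_cases hv : v = u
    · subst hv
      obtain ⟨m, hm, b, hb, hne⟩ := exists_isSplit_nonempty_sdiff _ hu
      exact ⟨b, m, by simpa using hm, fun _ ↦ hne, hb⟩
    · obtain ⟨b, hb⟩ := exists_isSplit (children p r v) _ one_ne_zero
      exact ⟨b, 1, Or.inl rfl, fun h ↦ absurd h hv, hb⟩
  have hcongr (v : V) (f g : V → Finset V) (b : Finset V)
      (hfg : ∀ w ∈ children p r v, f w = g w) : IsChoice v f b → IsChoice v g b :=
    fun ⟨m, hm, hne, hb⟩ ↦ ⟨m, hm, hne, hb.congr fun w hw ↦ by rw [hfg w hw]⟩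
  obtain ⟨B, hB⟩ := exists_forall_of_wellFounded hp.wellFounded_mem_children hex hcongr
  choose m hm hne hsplit using hB
  let D : Finset (Sym2 V) := if m u = 2 then {s(u, r)} else ∅
  have hD : D ⊆ {s(u, r)} := by grind
  have hmult (v : V) (hv : v ≠ r) : edgeMult D s(v, p v) = m v := by
    have hedge : s(v, p v) = s(u, r) ↔ v = u := by
      rw [← hp.parentEdge_eq_iff hv hur, hpu]
    grind [edgeMult]
  exact ⟨D, hD, B, fun v hv ↦ hmult v hv ▸ hsplit v, hne u rfl⟩

theorem IsParentMap.childEdge_notMem (hp : IsParentMap T r p)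
    (hr : children p r r = {u}) (hD : D ⊆ {s(u, r)}) (hv : v ≠ r) :
    ∀ w ∈ children p r v, s(v, w) ∉ D := by
  intro w hw hwD
  obtain ⟨hur, hpu⟩ : u ≠ r ∧ p u = r := mem_children.1 (by simp [hr])
  obtain ⟨hwr, rfl⟩ := mem_children.1 hw
  have hedge : s(w, p w) = s(u, p u) := by
    rw [hpu, Sym2.eq_swap]
    exact mem_singleton.1 (hD hwD)
  obtain rfl := (hp.parentEdge_eq_iff hwr hur).1 hedge
  exact hv hpu

theorem IsFlipColoring.eq_iff_notMem_of_mem_children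
    (hc : IsFlipColoring p r {v | v ∈ B (p v)} c) (hv : v ≠ r) :
    ∀ w ∈ children p r v, c s(v, w) = c s(v, p v) ↔ w ∉ B v := by
  intro w hw
  obtain ⟨hwr, rfl⟩ := mem_children.1 hw
  rw [Sym2.eq_swap]
  exact hc w hwr hv

theorem IsSplitSystem.wdeg_ne_wdeg_parent (hB : IsSplitSystem p r D B) (hp : IsParentMap T r p)
    (hr : children p r r = {u}) (hD : D ⊆ {s(u, r)}) (hu : (children p r u \ B u).Nonempty)
    (hc : IsFlipColoring p r {v | v ∈ B (p v)} c) (hv : v ≠ r) :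
    wdeg T D c (c s(v, p v)) v ≠ wdeg T D c (c s(v, p v)) (p v) := by
  have hD_children {v : V} (hv : v ≠ r) := hp.childEdge_notMem hr hD hv
  have hc_children {v : V} (hv : v ≠ r) := hc.eq_iff_notMem_of_mem_children hv
  have hwdeg {v : V} (hv : v ≠ r) :=
    hp.wdeg_parentEdge_color hv (hD_children hv) (hc_children hv)
  rw [hwdeg hv]
  by_cases hpv : p v = r
  · obtain rfl : v = u := by simpa [hr] using mem_children.2 ⟨hv, hpv⟩
    rw [hpv, hp.wdeg_root hr]
    have hpos := hu.card_pos
    omega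
  have hv_child : v ∈ children p r (p v) := mem_children.2 ⟨hv, rfl⟩
  have hmult : edgeMult D s(v, p v) = 1 := by
    rw [Sym2.eq_swap]
    exact edgeMult_of_notMem (hD_children hpv v hv_child)
  rw [hmult]
  by_cases hvB : v ∈ B (p v)
  · have hflip : c s(v, p v) ≠ c s(p v, p (p v)) := fun h ↦ (hc v hv hpv).1 h hvB
    rw [hp.wdeg_of_ne_parentEdge_color hpv (hD_children hpv) (hB _ hpv).subset
      (hc_children hpv) hflip]
    exact (hB _ hpv).ne_card v hvB
  · rw [(hc v hv hpv).2 hvB, hwdeg hpv]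
    exact (hB _ hpv).ne_card_sdiff_add v (mem_sdiff.2 ⟨hv_child, hvB⟩)

theorem IsSplitSystem.validDC (hB : IsSplitSystem p r D B) (hp : IsParentMap T r p)
    (hr : children p r r = {u}) (hD : D ⊆ {s(u, r)}) (hu : (children p r u \ B u).Nonempty)
    (hc : IsFlipColoring p r {v | v ∈ B (p v)} c) : ValidDC T D c := by
  obtain ⟨hur, hpu⟩ : u ≠ r ∧ p u = r := mem_children.1 (by simp [hr])
  refine ⟨fun e he ↦ ?_, fun v w hvw ↦ ?_⟩
  · rw [mem_singleton.1 (hD he), ← hpu]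
    exact hp.adj u hur
  · rcases hp.eq_or_eq_of_adj v w hvw with ⟨hv, rfl⟩ | ⟨hw, rfl⟩
    · exact hB.wdeg_ne_wdeg_parent hp hr hD hu hc hv
    · rw [Sym2.eq_swap]
      exact (hB.wdeg_ne_wdeg_parent hp hr hD hu hc hw).symm

end Graph

/-- Every tree of order at least three admits a valid doubling-coloring with at most one
doubled edge, i.e. `D_lir(T) ≤ 1`. -/
theorem Dlir_tree_le_one {V : Type*} [Fintype V] (T : SimpleGraph V)
    (htree : T.Connected ∧ T.IsAcyclic) (horder : 3 ≤ Fintype.card V) :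
    ∃ (D : Finset (Sym2 V)) (c : Sym2 V → Fin 2), ValidDC T D c ∧ D.card ≤ 1 := by
  have hT : T.IsTree := ⟨htree.1, htree.2⟩
  have : Nontrivial V := Fintype.one_lt_card_iff_nontrivial.1 (by omega)
  obtain ⟨r, hr⟩ := hT.exists_vert_degree_one_of_nontrivial
  obtain ⟨u, hru, hu⟩ := SimpleGraph.degree_eq_one_iff_existsUnique_adj.1 hr
  obtain ⟨p, hp⟩ := exists_isParentMap hT r
  have hroot : children p r r = {u} := by
    rw [← hp.filter_adj_root]
    grind
  obtain ⟨hur, hpu⟩ : u ≠ r ∧ p u = r := mem_children.1 (by simp [hroot])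
  obtain ⟨v, hvr, huv⟩ := exists_adj_ne_of_forall_adj_eq hT.connected.preconnected horder hu
  have hchildren : (children p r u).Nonempty :=
    ⟨v, mem_children.2 (by grind [hp.eq_or_eq_of_adj u v huv])⟩
  obtain ⟨D, hD, B, hB, hBu⟩ := hp.exists_isSplitSystem hur hpu hchildren
  obtain ⟨c, hc⟩ := hp.exists_isFlipColoring {v | v ∈ B (p v)}
  exact ⟨D, c, hB.validDC hp hroot hD hBu hc, by simpa using card_le_card hD⟩
end

section
/- Let G be a connected simple graph that contains at least one cycle and is not itself a cycle, such that every edge of G lies on at most one cycle, the maximum degree of G is at most 3, and every vertex of degree 3 lies on a cycle of G (these are exactly the non-cycle members of the family 𝔗*, obtained from a cycle by repeatedly identifying a degree-2 cycle vertex with an endvertex of a path of positive length, or with an endvertex of a path whose other endvertex is identified with a vertex of a new cycle). Let k = |E(G)| - |V(G)| + 1 be the number of cycles of G. Then there exist a matching E_d (a set of pairwise non-adjacent edges) of at most k edges of G, each edge of E_d having both endpoints of degree at least 2 in G, and a 2-edge-coloring c, such that (E_d, c) is a valid doubling-coloring of G. -/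
open Finset
open scoped Classical

/-- The degree of a vertex (as the number of neighbors). -/
noncomputable def ndeg {V : Type*} (G : SimpleGraph V) (v : V) : ℕ :=
  {w | G.Adj v w}.ncard

/-!
A bridge decouples its two sides: exchanging the two colours on one side of it affects no comparison
of weighted degrees on that side. So it suffices to colour the two ends of each bridge separately,
as long as the weights of its ends, each taken in the colour of the bridge at that end, are
distinct. A proper 2-labelling of the ends of the bridges guarantees this:
the weight is `2` (or `4`) at an end labelled `false` and `1` or `3` (or `4`, if the other end lies
on no cycle) at an end labelled `true`. The vertices off the cycles satisfy these requirements if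
all leaves are labelled `true`.

The cycles are vertex-disjoint and can now be coloured independently, each with at most one doubled
edge. Reading a cycle as a cyclic word in the requirements at its vertices, this is possible unless
no vertex has a bridge, which would make `G` a cycle, or every vertex has to have weight `1` or `3`.
To exclude the latter, let `r` be a vertex farthest from some other vertex, so that `r` has no
bridge if it lies on a cycle, and for each bridge between two cycles label the end farther from `r`
by `false`. Then the vertex of a cycle that is nearest to `r` is labelled `false` if its bridge
leads to a cycle.
-/

namespace SpecialCactus

/-- The kind of a vertex of a cycle: `free` if no bridge is attached to it; otherwise it says which
weights the vertex may have in the colour of its bridge. -/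
inductive VertexKind
  | free
  | odd
  | flexible
  | even

namespace VertexKind

/-- The weights which a vertex of the given kind may have in the colour of its bridge. -/
def Admits : VertexKind → ℕ → Prop
  | free, _ => True
  | odd, x => x = 1 ∨ x = 3
  | flexible, x => x = 1 ∨ x = 3 ∨ x = 4
  | even, x => x = 2 ∨ x = 4

/-- The weight in colour `c` of a cycle vertex whose cycle edges have weights `a`, `b` and colours
`α`, `β`, and whose bridge, present unless the vertex is free, has colour `γ`. -/
noncomputable def weight (t : VertexKind) (a b : ℕ) (α β γ c : Bool) : ℕ :=
  (if α = c then a else 0) + (if β = c then b else 0) + (if t ≠ free ∧ γ = c then 1 else 0)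

/-- The transition relation of a vertex on an oriented cycle. The state of an edge consists of its
colour and of the weight of its tail in that colour; the edges entering and leaving the vertex
have weights `a` and `b` and states `s` and `s'`. -/
def Step (t : VertexKind) (a b : ℕ) (s s' : Bool × ℕ) : Prop :=
  ∃ γ, t.Admits (t.weight a b s.1 s'.1 γ γ) ∧ t.weight a b s.1 s'.1 γ s.1 ≠ s.2 ∧
    t.weight a b s.1 s'.1 γ s'.1 = s'.2

variable {t : VertexKind} {p : Bool} {r : ℕ}

lemma step_free_not (hr : r ≠ 1) : free.Step 1 1 (p, r) (!p, 1) :=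
  ⟨p, by cases p <;> simp [Admits, weight, hr.symm]⟩

lemma step_free_self (hr : r ≠ 2) : free.Step 1 1 (p, r) (p, 2) :=
  ⟨p, by cases p <;> simp [Admits, weight, hr.symm]⟩

lemma step_two (ht : t = odd ∨ t = flexible) (hr : r ≠ 2) : t.Step 1 1 (p, r) (p, 2) :=
  ⟨!p, by rcases ht with rfl | rfl <;> cases p <;> simp [Admits, weight, hr.symm]⟩

lemma step_three (ht : t = odd ∨ t = flexible) (hr : r ≠ 3) : t.Step 1 1 (p, r) (p, 3) :=
  ⟨p, by rcases ht with rfl | rfl <;> cases p <;> simp [Admits, weight, hr.symm]⟩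

lemma step_even_one (hr : r ≠ 2) : even.Step 1 1 (p, r) (!p, 1) :=
  ⟨p, by cases p <;> simp [Admits, weight, hr.symm]⟩

lemma step_even_two (hr : r ≠ 1) : even.Step 1 1 (p, r) (!p, 2) :=
  ⟨!p, by cases p <;> simp [Admits, weight, hr.symm]⟩

lemma exists_step (t : VertexKind) (r₀ : ℕ) :
    ∃ (x : Bool) (v : ℕ), v ≤ 3 ∧ ∀ p r, (r = 2 ↔ r₀ = 2) → t.Step 1 1 (p, r) (p ^^ x, v) := by
  by_cases h₀ : r₀ = 2
  · suffices ∃ (x : Bool) (v : ℕ), v ≤ 3 ∧ ∀ p, t.Step 1 1 (p, 2) (p ^^ x, v) by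
      obtain ⟨x, v, hv, h⟩ := this
      refine ⟨x, v, hv, fun p r hr ↦ ?_⟩
      rw [hr.2 h₀]
      exact h p
    cases t
    · exact ⟨true, 1, by simp, fun p ↦ by simpa using step_free_not (by simp)⟩
    · exact ⟨false, 3, by simp, fun p ↦ by simpa using step_three (by simp) (by simp)⟩
    · exact ⟨false, 3, by simp, fun p ↦ by simpa using step_three (by simp) (by simp)⟩
    · exact ⟨true, 2, by simp, fun p ↦ by simpa using step_even_two (by simp)⟩
  · suffices ∃ (x : Bool) (v : ℕ), v ≤ 3 ∧ ∀ p r, r ≠ 2 → t.Step 1 1 (p, r) (p ^^ x, v) by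
      obtain ⟨x, v, hv, h⟩ := this
      exact ⟨x, v, hv, fun p r hr ↦ h p r (mt hr.1 h₀)⟩
    cases t
    · exact ⟨false, 2, by simp, fun p r hr ↦ by simpa using step_free_self hr⟩
    · exact ⟨false, 2, by simp, fun p r hr ↦ by simpa using step_two (by simp) hr⟩
    · exact ⟨false, 2, by simp, fun p r hr ↦ by simpa using step_two (by simp) hr⟩
    · exact ⟨true, 1, by simp, fun p r hr ↦ by simpa using step_even_one hr⟩

end VertexKind

open VertexKind

/-- `Trail τ s j s'`: edge states can be chosen along the path of vertices `1, …, j`, whose kinds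
are given by `τ` and whose edges are not doubled, from state `s` of the edge entering vertex `1`
to state `s'` of the edge leaving vertex `j`. -/
inductive Trail (τ : ℕ → VertexKind) (s : Bool × ℕ) : ℕ → Bool × ℕ → Prop
  | nil : Trail τ s 0 s
  | cons {j : ℕ} {u v : Bool × ℕ} (h : Trail τ s j u) (hstep : (τ (j + 1)).Step 1 1 u v) :
      Trail τ s (j + 1) v

lemma Trail.exists_seq {τ : ℕ → VertexKind} {s s' : Bool × ℕ} {j : ℕ} (h : Trail τ s j s') :
    ∃ f : ℕ → Bool × ℕ, f 0 = s ∧ f j = s' ∧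
      ∀ i < j, (τ (i + 1)).Step 1 1 (f i) (f (i + 1)) := by
  induction h with
  | nil => exact ⟨fun _ ↦ s, rfl, rfl, by simp⟩
  | @cons j u v _ hstep ih =>
    obtain ⟨f, h0, hj, hf⟩ := ih
    refine ⟨Function.update f (j + 1) v, by simpa using h0, by simp, fun i hi ↦ ?_⟩
    rcases Nat.lt_succ_iff_lt_or_eq.1 hi with hi | rfl
    · rw [Function.update_of_ne (by lia), Function.update_of_ne (by lia)]
      exact hf i hi
    · rw [Function.update_of_ne (by lia), Function.update_self, hj]
      exact hstep

lemma exists_uniform_trail (τ : ℕ → VertexKind) (j : ℕ) :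
    ∃ (x : Bool) (r : ℕ), r ≤ 3 ∧
      ∀ q s, s = 1 ∨ s = 3 → Trail τ (q, s) (j + 1) (q ^^ x, r) := by
  induction j with
  | zero =>
    obtain ⟨x, v, hv, h⟩ := exists_step (τ 1) 1
    exact ⟨x, v, hv, fun q s hs ↦ .cons .nil (h q s (by lia))⟩
  | succ j ih =>
    obtain ⟨x, r, -, h⟩ := ih
    obtain ⟨y, v, hv, h'⟩ := exists_step (τ (j + 2)) r
    refine ⟨x ^^ y, v, hv, fun q s hs ↦ .cons (h q s hs) ?_⟩
    rw [← Bool.xor_assoc]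
    exact h' _ r Iff.rfl

lemma trail_even {τ : ℕ → VertexKind} (h : ∀ i, τ i = even) (q : Bool) (s : ℕ) (hs : s ≠ 1) :
    ∀ j, Trail τ (q, s) (j + 1) (q ^^ (j + 1).bodd, 2)
  | 0 => .cons .nil <| by simpa [h] using step_even_two hs
  | j + 1 => .cons (trail_even h q s hs j) <| by
      simpa [h] using step_even_two (p := q ^^ (j + 1).bodd) (r := 2) (by lia)

/-- The weight of edge `i` of a cycle whose doubled edges are those in `D`. -/
noncomputable def edgeWeight {ι : Type*} (D : Set ι) (i : ι) : ℕ := if i ∈ D then 2 else 1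

/-- A cycle with vertices of the given kinds can be coloured, doubling at most one edge. The vertex
`i` is incident to the cycle edges `i` and `i + 1`. -/
def CycleColorable {n : ℕ} (τ : ZMod n → VertexKind) : Prop :=
  ∃ D : Set (ZMod n), D.Subsingleton ∧ ∃ s : ZMod n → Bool × ℕ,
    ∀ i, (τ i).Step (edgeWeight D i) (edgeWeight D (i + 1)) (s i) (s (i + 1))

lemma CycleColorable.of_rotate {n : ℕ} {τ : ZMod n → VertexKind} (a : ZMod n)
    (h : CycleColorable fun i ↦ τ (i + a)) : CycleColorable τ := by
  obtain ⟨D, hD, s, hs⟩ := h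
  refine ⟨(· - a) ⁻¹' D, hD.preimage (sub_left_injective), fun i ↦ s (i - a), fun i ↦ ?_⟩
  simpa only [edgeWeight, Set.mem_preimage, sub_add_cancel, sub_add_eq_add_sub] using hs (i - a)

lemma exists_and_not_succ {n : ℕ} [NeZero n] {Q : ZMod n → Prop} (h : ∃ i, Q i)
    (h' : ∃ i, ¬ Q i) : ∃ i, Q i ∧ ¬ Q (i + 1) := by
  by_contra! hsucc
  obtain ⟨a, ha⟩ := h
  obtain ⟨b, hb⟩ := h'
  have hall (k : ℕ) : Q (a + k) := by
    induction k with
    | zero => simpa using ha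
    | succ k ih => simpa [add_assoc] using hsucc _ ih
  exact hb (by simpa using hall (b - a).val)

lemma seq_val_add_one {α : Type*} {n : ℕ} [NeZero n] (hn : 1 < n) {f : ℕ → α} (hf : f n = f 0)
    (i : ZMod n) : f (i + 1).val = f (i.val + 1) := by
  have : Fact (1 < n) := ⟨hn⟩
  rw [ZMod.val_add, ZMod.val_one]
  rcases (Nat.succ_le_of_lt i.val_lt).lt_or_eq with h | h
  · rw [Nat.mod_eq_of_lt h]
  · rw [← Nat.succ_eq_add_one, h, Nat.mod_self, hf]

/-- The edge `0`, which joins the last vertex `-1` to the first vertex `0`, has weight `k`. -/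
lemma cycleColorable_of_trail {N k : ℕ} {τ : ZMod (N + 3) → VertexKind} (hk : k = 1 ∨ k = 2)
    {s u v : Bool × ℕ} (hfirst : (τ 0).Step k 1 s u)
    (htrail : Trail (fun i ↦ τ i) u (N + 1) v) (hlast : (τ (-1)).Step 1 k v s) :
    CycleColorable τ := by
  obtain ⟨f, hf0, hfN, hf⟩ := htrail.exists_seq
  let w : ℕ → ℕ := fun m ↦ if m = 0 ∨ m = N + 3 then k else 1
  let g : ℕ → Bool × ℕ := fun m ↦ if m = 0 ∨ m = N + 3 then s else f (m - 1)
  have hlast_cast : ((N + 2 : ℕ) : ZMod (N + 3)) = -1 := by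
    rw [eq_neg_iff_add_eq_zero]
    exact_mod_cast ZMod.natCast_self (N + 3)
  have hstep (m : ℕ) (hm : m < N + 3) :
      (τ m).Step (w m) (w (m + 1)) (g m) (g (m + 1)) := by
    rcases m with _ | m
    · simpa [w, g, hf0] using hfirst
    rcases (show m ≤ N + 1 by lia).lt_or_eq with hm' | rfl
    · simpa [w, g, hm'.ne, (show m ≠ N + 2 by lia)] using hf m hm'
    · simpa [w, g, hlast_cast, hfN] using hlast
  let D : Set (ZMod (N + 3)) := {i | i = 0 ∧ k = 2}
  have hweight (i : ZMod (N + 3)) : edgeWeight D i = w i.val := by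
    have := i.val_lt
    rcases hk with rfl | rfl <;> simp [edgeWeight, D, w, this.ne]
  refine ⟨D, fun i hi j hj ↦ hi.1.trans hj.1.symm, fun i ↦ g i.val, fun i ↦ ?_⟩
  simp only [hweight]
  rw [seq_val_add_one (f := w) (by lia) (by simp [w]),
    seq_val_add_one (f := g) (by lia) (by simp [g])]
  simpa only [ZMod.natCast_zmod_val] using hstep i.val i.val_lt

variable {N : ℕ} {τ : ZMod (N + 3) → VertexKind}

lemma cycleColorable_of_even (h : ∀ i, τ i = even) : CycleColorable τ := by
  have htrail (s : ℕ) (hs : s ≠ 1) :=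
    trail_even (τ := fun i ↦ τ i) (fun i ↦ h i) true s hs N
  rcases hN : (N + 1).bodd <;> rw [hN] at htrail
  · refine cycleColorable_of_trail (s := (false, 2)) (.inl rfl) ?_ (htrail 2 (by simp)) ?_
    · simpa [h] using step_even_two (p := false) (r := 2) (by simp)
    · simpa [h] using step_even_two (p := true) (r := 2) (by simp)
  · refine cycleColorable_of_trail (s := (false, 4)) (.inr rfl) ?_ (htrail 2 (by simp)) ?_
    · exact ⟨true, by simp [h, Admits, weight]⟩
    · exact ⟨false, by simp [h, Admits, weight]⟩

lemma cycleColorable_of_flexible_or_even {i : ZMod (N + 3)} (hi : τ i = flexible ∨ τ i = even)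
    (hi' : τ (i + 1) ≠ even) : CycleColorable τ := by
  refine .of_rotate (i + 1) ?_
  obtain ⟨x, r, hr, htrail⟩ := exists_uniform_trail (fun j ↦ τ (j + (i + 1))) N
  have hstart : ∃ u, (u = 1 ∨ u = 3) ∧ (τ (0 + (i + 1))).Step 2 1 (false, 4) (x, u) := by
    rw [zero_add]
    cases x
    · exact ⟨3, .inr rfl, true, by cases h : τ (i + 1) <;> simp_all [Admits, weight]⟩
    · exact ⟨1, .inl rfl, false, by cases h : τ (i + 1) <;> simp_all [Admits, weight]⟩
  have hend : (τ (-1 + (i + 1))).Step 1 2 (false, r) (false, 4) := by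
    rw [neg_add_cancel_comm_assoc]
    exact ⟨false, by rcases hi with hi | hi <;> simp [hi, Admits, weight, (show 4 ≠ r by lia)]⟩
  obtain ⟨u, hu, hstart⟩ := hstart
  exact cycleColorable_of_trail (.inr rfl) hstart (htrail x u hu) (by simpa using hend)

/-- The invariant for cycles with free and odd vertices: what is reachable, `A` by trails from a
doubled first edge and `X` by trails from a first edge that may be doubled or not. -/
def FreeOddInvariant (A X : Bool × ℕ → Prop) : Prop :=
  ∃ c, A (c, 3) ∧ X (c, 2) ∨ (∃ r ≠ 2, A (c, 2) ∧ X (c, r)) ∨ A (c, 1) ∧ X (!c, 2)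

lemma FreeOddInvariant.step {A X A' X' : Bool × ℕ → Prop} {t : VertexKind}
    (ht : t = free ∨ t = odd) (hA : ∀ u v, t.Step 1 1 u v → A u → A' v)
    (hX : ∀ u v, t.Step 1 1 u v → X u → X' v) (hAX : ∀ v, A' v → X' v) (h : FreeOddInvariant A X) :
    FreeOddInvariant A' X' := by
  obtain ⟨c, ⟨ha, hx⟩ | ⟨r, hr, ha, hx⟩ | ⟨ha, hx⟩⟩ := h <;> obtain rfl | rfl := ht
  · exact ⟨!c, .inr <| .inr ⟨hA _ _ (step_free_not (by simp)) ha,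
      by simpa using hAX _ (hA _ _ (step_free_self (by simp)) ha)⟩⟩
  · exact ⟨c, .inr <| .inl ⟨3, by simp, hA _ _ (step_two (by simp) (by simp)) ha,
      hX _ _ (step_three (by simp) (by simp)) hx⟩⟩
  · exact ⟨!c, .inr <| .inr ⟨hA _ _ (step_free_not (by simp)) ha,
      by simpa using hX _ _ (step_free_self hr) hx⟩⟩
  · exact ⟨c, .inl ⟨hA _ _ (step_three (by simp) (by simp)) ha,
      hX _ _ (step_two (by simp) hr) hx⟩⟩
  · exact ⟨c, .inr <| .inl ⟨1, by simp, hA _ _ (step_free_self (by simp)) ha,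
      by simpa using hX _ _ (step_free_not (by simp)) hx⟩⟩
  · exact ⟨c, .inr <| .inl ⟨3, by simp, hA _ _ (step_two (by simp) (by simp)) ha,
      hAX _ (hA _ _ (step_three (by simp) (by simp)) ha)⟩⟩

lemma freeOddInvariant_trail {τ : ℕ → VertexKind} (hτ : ∀ j, τ j = free ∨ τ j = odd) (j : ℕ) :
    FreeOddInvariant (Trail τ (true, 1) j)
      (fun v ↦ Trail τ (true, 1) j v ∨ Trail τ (false, 2) j v) := by
  induction j with
  | zero => exact ⟨true, .inr (.inr ⟨.nil, .inr .nil⟩)⟩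
  | succ j ih =>
    exact ih.step (hτ (j + 1)) (fun u v hstep ↦ (.cons · hstep))
      (fun u v hstep ↦ .imp (.cons · hstep) (.cons · hstep)) (fun _ ↦ .inl)

lemma cycleColorable_of_free_odd (hτ : ∀ i, τ i = free ∨ τ i = odd) (h0 : τ 0 = free)
    (hlast : τ (-1) = odd) : CycleColorable τ := by
  have hodd := step_two (t := odd) (p := false) (by simp) (r := 3) (by simp)
  have hodd' {r : ℕ} (hr : r ≠ 3) := step_three (t := odd) (p := false) (by simp) hr
  have hdoubled {r : ℕ} (hr : r ≠ 1) (h : Trail (fun j ↦ τ j) (true, 1) (N + 1) (true, r)) :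
      CycleColorable τ :=
    cycleColorable_of_trail (s := (false, 3)) (.inr rfl) ⟨true, by simp [h0, Admits, weight]⟩ h
      ⟨false, by simp [hlast, hr.symm, Admits, weight]⟩
  have hsingle {r : ℕ} (hr : r ≠ 3) (h : Trail (fun j ↦ τ j) (true, 1) (N + 1) (false, r) ∨
      Trail (fun j ↦ τ j) (false, 2) (N + 1) (false, r)) : CycleColorable τ := by
    rcases h with h | h
    · exact cycleColorable_of_trail (.inl rfl) (h0 ▸ step_free_not (by simp)) h (hlast ▸ hodd' hr)
    · exact cycleColorable_of_trail (.inl rfl) (h0 ▸ step_free_self (by simp)) h (hlast ▸ hodd' hr)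
  obtain ⟨c, ⟨ha, -⟩ | ⟨-, -, ha, -⟩ | ⟨ha, hx⟩⟩ :=
    freeOddInvariant_trail (τ := fun j ↦ τ j) (fun j ↦ hτ _) (N + 1) <;> cases c
  · exact cycleColorable_of_trail (.inl rfl) (h0 ▸ step_free_not (by simp)) ha (hlast ▸ hodd)
  · exact hdoubled (by simp) ha
  · exact hsingle (by simp) (.inl ha)
  · exact hdoubled (by simp) ha
  · exact hsingle (by simp) (.inl ha)
  · exact hsingle (by simp) hx

lemma cycleColorable (h : ∃ i, τ i ≠ free) (h' : ∃ i, τ i ≠ odd) : CycleColorable τ := by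
  by_cases hfo : ∀ i, τ i = free ∨ τ i = odd
  · obtain ⟨i, hi, hi'⟩ := exists_and_not_succ h
      (h'.imp fun i hi ↦ not_not.2 ((hfo i).resolve_right hi))
    exact .of_rotate (i + 1) <| cycleColorable_of_free_odd (fun j ↦ hfo _)
      (by simpa using hi') (by simpa using (hfo i).resolve_left hi)
  push Not at hfo
  by_cases he : ∀ i, τ i = even
  · exact cycleColorable_of_even he
  push Not at he
  by_cases hfe : ∃ i, τ i = even
  · obtain ⟨i, hi, hi'⟩ := exists_and_not_succ hfe he
    exact cycleColorable_of_flexible_or_even (.inr hi) hi'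
  · push Not at hfe
    obtain ⟨i, hi⟩ := hfo
    refine cycleColorable_of_flexible_or_even (i := i) (.inl ?_) (hfe _)
    cases h : τ i <;> simp_all

section Bridges

variable {V : Type*} {G : SimpleGraph V}

lemma mem_of_reachable {S : Set V} {u v : V} (h : G.Reachable u v)
    (hS : ∀ x ∈ S, ∀ y, G.Adj x y → y ∈ S) (hu : u ∈ S) : v ∈ S := by
  obtain ⟨p⟩ := h
  by_contra hv
  obtain ⟨d, -, hd, hd'⟩ := p.exists_boundary_dart S hu hv
  exact hd' (hS _ hd _ d.adj)

lemma exists_cut_of_isBridge (S : Finset (Sym2 V)) (hS : ∀ e ∈ S, G.IsBridge e) :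
    ∃ h : V → Bool, ∀ u v, G.Adj u v → (h u ^^ h v) = decide (s(u, v) ∈ S) := by
  induction S using Finset.induction_on with
  | empty => exact ⟨fun _ ↦ false, by simp⟩
  | insert e S heS ih =>
    obtain ⟨h, hh⟩ := ih fun f hf ↦ hS f (mem_insert_of_mem hf)
    induction e with | _ a b
    have hab : ¬ (G.deleteEdges {s(a, b)}).Reachable a b := hS _ (mem_insert_self _ _)
    have hside (u v : V) (huv : G.Adj u v) :
        (decide ((G.deleteEdges {s(a, b)}).Reachable a u) ^^
          decide ((G.deleteEdges {s(a, b)}).Reachable a v)) = decide (s(u, v) = s(a, b)) := by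
      by_cases he : s(u, v) = s(a, b)
      · rcases Sym2.eq_iff.1 he with ⟨rfl, rfl⟩ | ⟨rfl, rfl⟩
        · simp [hab]
        · simp [Sym2.eq_swap (a := u), hab]
      · have hadj : (G.deleteEdges {s(a, b)}).Adj u v := by simp [huv, he]
        have : (G.deleteEdges {s(a, b)}).Reachable a u ↔ (G.deleteEdges {s(a, b)}).Reachable a v :=
          ⟨(·.trans hadj.reachable), (·.trans hadj.symm.reachable)⟩
        simp [this, he]
    refine ⟨fun v ↦ h v ^^ decide ((G.deleteEdges {s(a, b)}).Reachable a v), fun u v huv ↦ ?_⟩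
    rw [Bool.xor_assoc, Bool.xor_left_comm _ (h v), ← Bool.xor_assoc, hh u v huv, hside u v huv]
    by_cases he : s(u, v) = s(a, b)
    · simp only [he, heS, mem_insert_self, decide_true, decide_false, Bool.false_xor]
    · simp only [he, mem_insert, false_or, decide_false, Bool.xor_false]

lemma connected_deleteEdges (hG : G.Connected) (D : Finset (Sym2 V))
    (hD : ∀ e ∈ D, e ∈ G.edgeSet ∧ ¬ G.IsBridge e)
    (hcycle : ∀ ⦃u : V⦄ (p : G.Walk u u), p.IsCycle →
      ∀ e ∈ D, ∀ f ∈ D, e ∈ p.edges → f ∈ p.edges → e = f) :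
    (G.deleteEdges D).Connected := by
  induction D using Finset.induction_on with
  | empty => simpa using hG
  | insert e D heD ih =>
    have ih := ih (fun f hf ↦ hD f (mem_insert_of_mem hf)) fun u p hp f hf f' hf' ↦
      hcycle p hp f (mem_insert_of_mem hf) f' (mem_insert_of_mem hf')
    obtain ⟨he, hebridge⟩ := hD e (mem_insert_self _ _)
    rw [SimpleGraph.isBridge_iff_forall_cycle_notMem he] at hebridge
    push Not at hebridge
    obtain ⟨u, p, hp, hep⟩ := hebridge
    have hpD : ∀ f ∈ p.edges, f ∈ (G.deleteEdges D).edgeSet := fun f hf ↦ by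
      rw [SimpleGraph.edgeSet_deleteEdges]
      refine ⟨p.edges_subset_edgeSet hf, fun hfD ↦ heD ?_⟩
      rwa [hcycle p hp e (mem_insert_self _ _) f (mem_insert_of_mem hfD) hep hf]
    have hnot : ¬ (G.deleteEdges D).IsBridge e := fun h ↦
      h.notMem_edges_of_isCycle (hp.transfer hpD) (by rwa [SimpleGraph.Walk.edges_transfer])
    obtain ⟨x, y⟩ := e
    have := ih.connected_delete_edge_of_not_isBridge hnot
    rwa [SimpleGraph.deleteEdges_deleteEdges, Set.union_singleton, ← coe_insert] at this

lemma card_le_cyclomatic_number [Fintype V] (hG : G.Connected) (D : Finset (Sym2 V))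
    (hD : ∀ e ∈ D, e ∈ G.edgeSet ∧ ¬ G.IsBridge e)
    (hcycle : ∀ ⦃u : V⦄ (p : G.Walk u u), p.IsCycle →
      ∀ e ∈ D, ∀ f ∈ D, e ∈ p.edges → f ∈ p.edges → e = f) :
    #D ≤ G.edgeSet.ncard + 1 - Fintype.card V := by
  have hsub : (D : Set (Sym2 V)) ⊆ G.edgeSet := fun e he ↦ (hD e he).1
  have hle := Set.ncard_le_ncard hsub
  have hcard := (connected_deleteEdges hG D hD hcycle).card_vert_le_card_edgeSet_add_one
  rw [SimpleGraph.edgeSet_deleteEdges, Nat.card_coe_set_eq, Nat.card_eq_fintype_card,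
    Set.ncard_sdiff hsub, Set.ncard_coe_finset] at hcard
  rw [Set.ncard_coe_finset] at hle
  lia

lemma exists_coloring_eqOn (C : G.Coloring Bool) {S : Set V}
    (hS : S.InjOn G.connectedComponentMk) (f : V → Bool) :
    ∃ C' : G.Coloring Bool, S.EqOn C' f := by
  let flip (K : G.ConnectedComponent) : Bool :=
    if h : ∃ x ∈ S, G.connectedComponentMk x = K then C h.choose ^^ f h.choose else false
  refine ⟨SimpleGraph.Coloring.mk (fun v ↦ C v ^^ flip (G.connectedComponentMk v))
    fun {v w} hvw ↦ ?_, fun x hx ↦ ?_⟩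
  · rw [SimpleGraph.ConnectedComponent.connectedComponentMk_eq_of_adj hvw]
    simpa using C.valid hvw
  · have h : ∃ y ∈ S, G.connectedComponentMk y = G.connectedComponentMk x := ⟨x, hx, rfl⟩
    have hx' : h.choose = x := hS h.choose_spec.1 hx h.choose_spec.2
    change (C x ^^ flip _) = f x
    simp only [flip, dif_pos h, hx', ← Bool.xor_assoc, Bool.xor_self, Bool.false_xor]

end Bridges

section HalfEdgeColorings

variable {V : Type*} {G : SimpleGraph V}

lemma exists_edge_coloring_xor [Finite V] (c : V → V → Bool)
    (hsymm : ∀ u v, G.Adj u v → ¬ G.IsBridge s(u, v) → c u v = c v u) :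
    ∃ (c' : Sym2 V → Bool) (h : V → Bool), ∀ u v, G.Adj u v → c' s(u, v) = (c u v ^^ h u) := by
  have := Fintype.ofFinite V
  let S : Finset (Sym2 V) := {e | G.IsBridge e ∧ ∃ u v, e = s(u, v) ∧ c u v ≠ c v u}
  have hS (u v : V) (huv : G.Adj u v) : decide (s(u, v) ∈ S) = (c u v ^^ c v u) := by
    by_cases hc : c u v = c v u
    · have : s(u, v) ∉ S := by
        simp only [S, mem_filter_univ, not_and, not_exists]
        rintro - x y hxy
        rcases Sym2.eq_iff.1 hxy with ⟨rfl, rfl⟩ | ⟨rfl, rfl⟩ <;> simp [hc]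
      simp [this, hc]
    · have : s(u, v) ∈ S := by
        simp only [S, mem_filter_univ]
        exact ⟨of_not_not (mt (hsymm u v huv) hc), u, v, rfl, hc⟩
      simpa [this] using hc
  obtain ⟨h, hh⟩ := exists_cut_of_isBridge (G := G) S fun e he ↦ (mem_filter_univ _ |>.1 he).1
  refine ⟨Sym2.lift ⟨fun u v ↦ (c u v ^^ h u) && (c v u ^^ h v), fun _ _ ↦ Bool.and_comm _ _⟩, h,
    fun u v huv ↦ ?_⟩
  have huv := (hh u v huv).trans (hS u v huv)
  change ((c u v ^^ h u) && (c v u ^^ h v)) = (c u v ^^ h u)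
  revert huv
  cases c u v <;> cases c v u <;> cases h u <;> cases h v <;> simp

variable [Fintype V]

/-- The weighted degree of `v` in colour `b` for a half-edge colouring `c`: `c v w` is the colour
of the edge `vw` at its end `v`, and may differ from `c w v`. -/
noncomputable def dartDegree {κ : Type*} (G : SimpleGraph V) (D : Set (Sym2 V)) (c : V → V → κ)
    (b : κ) (v : V) : ℕ :=
  ∑ w with G.Adj v w ∧ c v w = b, if s(v, w) ∈ D then 2 else 1

lemma wdeg_eq_dartDegree {D : Finset (Sym2 V)} {c' : Sym2 V → Fin 2} {c : V → V → Bool} {i : Fin 2}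
    {b : Bool} {v : V} (h : ∀ w, G.Adj v w → (c' s(v, w) = i ↔ c v w = b)) :
    wdeg G D c' i v = dartDegree G D c b v := by
  simp only [wdeg, dartDegree, mem_coe]
  congr! 2 with w
  exact and_congr_right (h w)

lemma exists_validDC_of_dart {D : Finset (Sym2 V)} (hD : ↑D ⊆ G.edgeSet) (c : V → V → Bool)
    (hsymm : ∀ u v, G.Adj u v → ¬ G.IsBridge s(u, v) → c u v = c v u)
    (hne : ∀ u v, G.Adj u v → dartDegree G D c (c u v) u ≠ dartDegree G D c (c v u) v) :
    ∃ c' : Sym2 V → Fin 2, ValidDC G D c' := by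
  obtain ⟨c', h, hc'⟩ := exists_edge_coloring_xor c hsymm
  refine ⟨finTwoEquiv.symm ∘ c', hD, fun u v huv ↦ ?_⟩
  have key (x y : V) (hxy : G.Adj x y) :
      wdeg G D (finTwoEquiv.symm ∘ c') ((finTwoEquiv.symm ∘ c') s(x, y)) x =
        dartDegree G D c (c x y) x :=
    wdeg_eq_dartDegree fun w hw ↦ by simp [hc' x w hw, hc' x y hxy]
  rw [key u v huv, Sym2.eq_swap, key v u huv.symm]
  exact hne u v huv

end HalfEdgeColorings

section Structure

variable {V : Type*} {G : SimpleGraph V} {u v w x : V}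

/-- The graph formed by the bridges of `G`. -/
def bridgeGraph (G : SimpleGraph V) : SimpleGraph V := G.deleteEdges {e | ¬ G.IsBridge e}

/-- The graph formed by the edges of `G` that lie on cycles. -/
def nonbridgeGraph (G : SimpleGraph V) : SimpleGraph V := G.deleteEdges {e | G.IsBridge e}

/-- The vertex `v` lies on a cycle of `G`. -/
def OnCycle (G : SimpleGraph V) (v : V) : Prop := ∃ w, (nonbridgeGraph G).Adj v w

lemma bridgeGraph_adj : (bridgeGraph G).Adj v w ↔ G.Adj v w ∧ G.IsBridge s(v, w) := by
  simp [bridgeGraph]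

lemma nonbridgeGraph_adj : (nonbridgeGraph G).Adj v w ↔ G.Adj v w ∧ ¬ G.IsBridge s(v, w) := by
  simp [nonbridgeGraph]

lemma disjoint_bridgeGraph_nonbridgeGraph : Disjoint (bridgeGraph G) (nonbridgeGraph G) := by
  rw [SimpleGraph.disjoint_left]
  exact fun v w h h' ↦ (nonbridgeGraph_adj.1 h').2 (bridgeGraph_adj.1 h).2

lemma bridgeGraph_sup_nonbridgeGraph : bridgeGraph G ⊔ nonbridgeGraph G = G := by
  ext v w
  rw [SimpleGraph.sup_adj, bridgeGraph_adj, nonbridgeGraph_adj, ← and_or_left,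
    and_iff_left (em _)]

lemma bridgeGraph_isAcyclic : (bridgeGraph G).IsAcyclic :=
  SimpleGraph.isAcyclic_iff_forall_adj_isBridge.2 fun _ _ h ↦
    (bridgeGraph_adj.1 h).2.anti (SimpleGraph.deleteEdges_le _)

lemma exists_isCycle_of_nonbridgeGraph_adj (h : (nonbridgeGraph G).Adj v w) :
    ∃ (u : V) (p : G.Walk u u), p.IsCycle ∧ s(v, w) ∈ p.edges := by
  obtain ⟨hadj, hbridge⟩ := nonbridgeGraph_adj.1 h
  exact SimpleGraph.adj_and_reachable_delete_edges_iff_exists_cycle.1 ⟨hadj, not_not.1 hbridge⟩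

lemma mem_edgeSet_nonbridgeGraph_of_isCycle {p : G.Walk u u} (hp : p.IsCycle) {e : Sym2 V}
    (he : e ∈ p.edges) : e ∈ (nonbridgeGraph G).edgeSet := by
  rw [nonbridgeGraph, SimpleGraph.edgeSet_deleteEdges]
  exact ⟨p.edges_subset_edgeSet he, fun h ↦ h.notMem_edges_of_isCycle hp he⟩

lemma onCycle_of_mem {e : Sym2 V} (he : e ∈ (nonbridgeGraph G).edgeSet) (hv : v ∈ e) :
    OnCycle G v := by
  obtain ⟨w, rfl⟩ := Sym2.mem_iff_exists.1 hv
  exact ⟨w, he⟩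

lemma onCycle_of_isCycle {p : G.Walk u u} (hp : p.IsCycle) (hv : v ∈ p.support) : OnCycle G v := by
  obtain ⟨e, he, hve⟩ :=
    (SimpleGraph.Walk.mem_support_iff_exists_mem_edges_of_not_nil hp.not_nil).1 hv
  exact onCycle_of_mem (mem_edgeSet_nonbridgeGraph_of_isCycle hp he) hve

lemma reachable_nonbridgeGraph_of_isCycle {p : G.Walk u u} (hp : p.IsCycle) (hv : v ∈ p.support)
    (hw : w ∈ p.support) : (nonbridgeGraph G).Reachable v w := by
  have hreach {x : V} (hx : x ∈ p.support) : (nonbridgeGraph G).Reachable u x := by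
    let q := p.transfer (nonbridgeGraph G) fun _ ↦ mem_edgeSet_nonbridgeGraph_of_isCycle hp
    exact (q.takeUntil x (by simpa [q] using hx)).reachable
  exact (hreach hv).symm.trans (hreach hw)

lemma supp_connectedComponentMk_of_not_onCycle (hv : ¬ OnCycle G v) :
    ((nonbridgeGraph G).connectedComponentMk v).supp = {v} := by
  ext w
  rw [SimpleGraph.ConnectedComponent.mem_supp_iff, SimpleGraph.ConnectedComponent.eq]
  refine ⟨fun h ↦ mem_of_reachable h.symm ?_ rfl, by rintro rfl; rfl⟩
  rintro _ rfl y hy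
  exact absurd ⟨y, hy⟩ hv

lemma ndeg_sup [Finite V] {G₁ G₂ : SimpleGraph V} (h : Disjoint G₁ G₂) (v : V) :
    ndeg (G₁ ⊔ G₂) v = ndeg G₁ v + ndeg G₂ v := by
  rw [ndeg, ndeg, ndeg, ← Set.ncard_union_eq]
  · rfl
  · exact Set.disjoint_left.2 fun w hw hw' ↦ SimpleGraph.disjoint_left.1 h v w hw hw'

-- Two distinct cycles through a vertex of degree at most three share an edge at this vertex.
lemma isCycles_nonbridgeGraph [Finite V]
    (hcactus : ∀ (e : Sym2 V) (u v : V) (p : G.Walk u u) (q : G.Walk v v),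
      p.IsCycle → q.IsCycle → e ∈ p.edges → e ∈ q.edges → ∀ f, f ∈ p.edges ↔ f ∈ q.edges)
    (hdeg : ∀ v, ndeg G v ≤ 3) : (nonbridgeGraph G).IsCycles := by
  rintro v ⟨w, hw⟩
  obtain ⟨u, p, hp, hwp⟩ := exists_isCycle_of_nonbridgeGraph_adj hw
  have hp₂ := hp.ncard_neighborSet_toSubgraph_eq_two (p.fst_mem_support_of_mem_edges hwp)
  suffices (nonbridgeGraph G).neighborSet v = p.toSubgraph.neighborSet v by rw [this, hp₂]
  ext z
  rw [SimpleGraph.Subgraph.mem_neighborSet, SimpleGraph.Walk.adj_toSubgraph_iff_mem_edges]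
  refine ⟨fun hz ↦ ?_, mem_edgeSet_nonbridgeGraph_of_isCycle hp⟩
  obtain ⟨u', q, hq, hzq⟩ := exists_isCycle_of_nonbridgeGraph_adj hz
  have hq₂ := hq.ncard_neighborSet_toSubgraph_eq_two (q.fst_mem_support_of_mem_edges hzq)
  have hunion : (p.toSubgraph.neighborSet v ∪ q.toSubgraph.neighborSet v).ncard ≤ 3 :=
    (Set.ncard_le_ncard (Set.union_subset (p.toSubgraph.neighborSet_subset v)
      (q.toSubgraph.neighborSet_subset v))).trans (hdeg v)
  have hsum := Set.ncard_union_add_ncard_inter (p.toSubgraph.neighborSet v)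
    (q.toSubgraph.neighborSet v)
  obtain ⟨x, hxp, hxq⟩ := Set.nonempty_of_ncard_ne_zero
    (s := p.toSubgraph.neighborSet v ∩ q.toSubgraph.neighborSet v) (by lia)
  rw [SimpleGraph.Subgraph.mem_neighborSet, SimpleGraph.Walk.adj_toSubgraph_iff_mem_edges]
    at hxp hxq
  exact (hcactus _ _ _ p q hp hq hxp hxq _).2 hzq

end Structure

/-- The structure of the members of `𝔗*` in terms of the partition of their edges into bridges and
cycle edges: the cycles are disjoint, there is at least one of them, at most one bridge is attached
to each of their vertices, and the bridges form paths outside of the cycles. -/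
structure IsSpecialCactus {V : Type*} (G : SimpleGraph V) : Prop where
  connected : G.Connected
  exists_onCycle : ∃ v, OnCycle G v
  isCycles : (nonbridgeGraph G).IsCycles
  ndeg_le_three : ∀ v, ndeg G v ≤ 3
  ndeg_le_two : ∀ v, ¬ OnCycle G v → ndeg G v ≤ 2

lemma isSpecialCactus {V : Type*} [Finite V] {G : SimpleGraph V} (hconn : G.Connected)
    (hcyc : ∃ (u : V) (p : G.Walk u u), p.IsCycle)
    (hcactus : ∀ (e : Sym2 V) (u v : V) (p : G.Walk u u) (q : G.Walk v v),
      p.IsCycle → q.IsCycle → e ∈ p.edges → e ∈ q.edges → ∀ f, f ∈ p.edges ↔ f ∈ q.edges)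
    (hdeg : ∀ v, ndeg G v ≤ 3)
    (hdegcyc : ∀ v, ndeg G v = 3 → ∃ (u : V) (p : G.Walk u u), p.IsCycle ∧ v ∈ p.support) :
    IsSpecialCactus G where
  connected := hconn
  exists_onCycle := by
    obtain ⟨u, p, hp⟩ := hcyc
    exact ⟨u, onCycle_of_isCycle hp p.start_mem_support⟩
  isCycles := isCycles_nonbridgeGraph hcactus hdeg
  ndeg_le_three := hdeg
  ndeg_le_two v hv := by
    refine Nat.le_of_lt_succ ((hdeg v).lt_of_ne fun h ↦ hv ?_)
    obtain ⟨u, p, hp, hvp⟩ := hdegcyc v h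
    exact onCycle_of_isCycle hp hvp

namespace IsSpecialCactus

variable {V : Type*} {G : SimpleGraph V} {v w x : V}

lemma ndeg_nonbridgeGraph (hG : IsSpecialCactus G) (hv : OnCycle G v) :
    ndeg (nonbridgeGraph G) v = 2 := hG.isCycles hv

variable [Finite V]

lemma two_le_ndeg (hG : IsSpecialCactus G) (hv : OnCycle G v) : 2 ≤ ndeg G v :=
  (hG.ndeg_nonbridgeGraph hv).ge.trans
    (Set.ncard_le_ncard fun _ hw ↦ (nonbridgeGraph_adj.1 hw).1)

lemma bridgeGraph_adj_unique (hG : IsSpecialCactus G) (hv : OnCycle G v)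
    (hw : (bridgeGraph G).Adj v w) (hx : (bridgeGraph G).Adj v x) : w = x := by
  have hsum : ndeg G v = ndeg (bridgeGraph G) v + ndeg (nonbridgeGraph G) v := by
    rw [← ndeg_sup disjoint_bridgeGraph_nonbridgeGraph, bridgeGraph_sup_nonbridgeGraph]
  have hle := hG.ndeg_le_three v
  rw [hsum, hG.ndeg_nonbridgeGraph hv] at hle
  exact (Set.ncard_le_one (Set.toFinite _)).1 (Nat.le_of_add_le_add_right hle) w hw x hx

end IsSpecialCactus

section Root

variable {V : Type*} {G : SimpleGraph V}

lemma reachable_deleteEdges_of_dist_le (hG : G.Connected) {o r v : V} (hv : v ≠ r)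
    (hdist : G.dist o v ≤ G.dist o r) (w : V) : (G.deleteEdges {s(r, w)}).Reachable o v := by
  obtain ⟨p, hp⟩ := hG.exists_walk_length_eq_dist o v
  refine ⟨p.toDeleteEdge _ fun he ↦ ?_⟩
  have hr := p.fst_mem_support_of_mem_edges he
  have hlt := p.length_takeUntil_lt_length hr hv.symm
  have hle := SimpleGraph.dist_le (p.takeUntil r hr)
  lia

-- A vertex `r` at maximal distance from some vertex does not separate its neighbours.
lemma exists_forall_isBridge_eq [Finite V] (hG : G.Connected) :
    ∃ r, ∀ v w, G.Adj r v → G.Adj r w → G.IsBridge s(r, w) → v = w := by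
  have := hG.nonempty
  let o : V := Classical.arbitrary V
  obtain ⟨r, hr⟩ := Finite.exists_max (G.dist o)
  refine ⟨r, fun v w hv hw hbridge ↦ ?_⟩
  by_contra hvw
  have hrv : (G.deleteEdges {s(r, w)}).Adj r v := by
    simp [hv, hvw, hw.ne]
  exact hbridge (hrv.reachable.trans
    ((reachable_deleteEdges_of_dist_le hG hv.ne.symm (hr v) w).symm.trans
      (reachable_deleteEdges_of_dist_le hG hw.ne.symm (hr w) w)))

end Root

/-- The vertex `v` is the end, farther from `r`, of a bridge that joins two cycles. -/
def IsFarEnd {V : Type*} (G : SimpleGraph V) (r v : V) : Prop :=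
  OnCycle G v ∧ ∃ u, (bridgeGraph G).Adj v u ∧ OnCycle G u ∧ G.dist r u < G.dist r v

namespace IsSpecialCactus

variable {V : Type*} [Finite V] {G : SimpleGraph V} {r v w x y : V}

lemma eq_or_eq_of_reachable (hG : IsSpecialCactus G) (hv : OnCycle G v) (hw : OnCycle G w)
    (hvw : (bridgeGraph G).Adj v w) (hx : (bridgeGraph G).Reachable v x) : x = v ∨ x = w := by
  refine mem_of_reachable (S := {v, w}) hx ?_ (Or.inl rfl)
  rintro a (rfl | rfl) b hab
  · exact Or.inr (hG.bridgeGraph_adj_unique hv hab hvw)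
  · exact Or.inl (hG.bridgeGraph_adj_unique hw hab hvw.symm)

lemma ndeg_eq_ncard_neighborSet_of_mem_support (hG : IsSpecialCactus G) (hx : ndeg G x = 1)
    (hy : ndeg G y = 1) (hxy : x ≠ y) {p : (bridgeGraph G).Walk x y} (hp : p.IsPath)
    (hv : v ∈ p.support) : ¬ OnCycle G v ∧ ndeg G v = (p.toSubgraph.neighborSet v).ncard := by
  have hnil : ¬ p.Nil := fun h ↦ hxy h.eq
  have hleaf {z : V} (hz : ndeg G z = 1) : ¬ OnCycle G z := fun h ↦ by
    have := hG.two_le_ndeg h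
    lia
  obtain ⟨i, rfl, hi⟩ := SimpleGraph.Walk.mem_support_iff_exists_getVert.1 hv
  rcases Nat.eq_zero_or_pos i with rfl | hi₀
  · rw [p.getVert_zero, hp.neighborSet_toSubgraph_startpoint hnil, Set.ncard_singleton]
    exact ⟨hleaf hx, hx⟩
  rcases hi.eq_or_lt with rfl | hilt
  · rw [p.getVert_length, hp.neighborSet_toSubgraph_endpoint hnil, Set.ncard_singleton]
    exact ⟨hleaf hy, hy⟩
  · have htwo := hp.ncard_neighborSet_toSubgraph_internal_eq_two hi₀.ne' hilt
    have hsub : p.toSubgraph.neighborSet (p.getVert i) ⊆ {w | G.Adj (p.getVert i) w} :=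
      fun w hw ↦ (bridgeGraph_adj.1 hw.adj_sub).1
    have hoff : ¬ OnCycle G (p.getVert i) := fun h ↦ by
      have : (p.toSubgraph.neighborSet (p.getVert i)).ncard ≤ 1 :=
        (Set.ncard_le_one (Set.toFinite _)).2 fun a ha b hb ↦
          hG.bridgeGraph_adj_unique h ha.adj_sub hb.adj_sub
      lia
    exact ⟨hoff, le_antisymm (htwo ▸ hG.ndeg_le_two _ hoff) (Set.ncard_le_ncard hsub)⟩

-- A path of bridges between two leaves would be all of `G`.
lemma eq_of_ndeg_eq_one (hG : IsSpecialCactus G) (hx : ndeg G x = 1) (hy : ndeg G y = 1)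
    (h : (bridgeGraph G).Reachable x y) : x = y := by
  by_contra hxy
  obtain ⟨p, hp⟩ := h.exists_isPath
  have hclosed : ∀ v ∈ {v | v ∈ p.support}, ∀ w, G.Adj v w → w ∈ {v | v ∈ p.support} := by
    intro v hv w hvw
    have hcard := (hG.ndeg_eq_ncard_neighborSet_of_mem_support hx hy hxy hp hv).2
    have heq : p.toSubgraph.neighborSet v = {w | G.Adj v w} :=
      Set.eq_of_subset_of_ncard_le (fun w hw ↦ (bridgeGraph_adj.1 hw.adj_sub).1) hcard.le
    have hw : w ∈ p.toSubgraph.neighborSet v := heq.symm ▸ hvw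
    exact SimpleGraph.Walk.mem_support_of_adj_toSubgraph hw.symm
  obtain ⟨v, hv⟩ := hG.exists_onCycle
  have hvp := mem_of_reachable (hG.connected x v) hclosed p.start_mem_support
  exact (hG.ndeg_eq_ncard_neighborSet_of_mem_support hx hy hxy hp hvp).1 hv

lemma eq_of_isFarEnd (hG : IsSpecialCactus G) (hx : IsFarEnd G r x)
    (hy : ndeg G y = 1 ∨ IsFarEnd G r y) (h : (bridgeGraph G).Reachable x y) : x = y := by
  obtain ⟨hxC, u, hxu, huC, hlt⟩ := hx
  rcases hG.eq_or_eq_of_reachable hxC huC hxu h with rfl | rfl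
  · rfl
  rcases hy with hy | ⟨-, x', hyx', -, hlt'⟩
  · have := hG.two_le_ndeg huC
    lia
  · obtain rfl := hG.bridgeGraph_adj_unique huC hyx' hxu.symm
    exact absurd hlt hlt'.asymm

lemma exists_coloring_bridgeGraph (hG : IsSpecialCactus G) (r : V) :
    ∃ t : (bridgeGraph G).Coloring Bool,
      (∀ v, ndeg G v = 1 → t v = true) ∧ ∀ v, IsFarEnd G r v → t v = false := by
  have hinj : {v | ndeg G v = 1 ∨ IsFarEnd G r v}.InjOn (bridgeGraph G).connectedComponentMk := by
    intro x hx y hy hxy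
    have hreach := SimpleGraph.ConnectedComponent.exact hxy
    rcases hx with hx | hx
    · rcases hy with hy | hy
      · exact hG.eq_of_ndeg_eq_one hx hy hreach
      · exact (hG.eq_of_isFarEnd hy (Or.inl hx) hreach.symm).symm
    · exact hG.eq_of_isFarEnd hx hy hreach
  obtain ⟨t, ht⟩ := exists_coloring_eqOn
    (bridgeGraph_isAcyclic.colorable_two.toColoring (by simp)) hinj fun v ↦ decide (ndeg G v = 1)
  refine ⟨t, fun v hv ↦ by simp [ht (Or.inl hv), hv], fun v hv ↦ ?_⟩
  have := hG.two_le_ndeg hv.1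
  simp only [ht (Or.inr hv), decide_eq_false_iff_not]
  lia

end IsSpecialCactus

section CyclicEnumeration

lemma sub_one_ne_add_one {N : ℕ} (i : ZMod (N + 3)) : i - 1 ≠ i + 1 := fun h ↦ by
  have htwo : ((2 : ℕ) : ZMod (N + 3)) = 0 := by
    push_cast
    linear_combination -h
  have := Nat.le_of_dvd (by lia) ((ZMod.natCast_eq_zero_iff _ _).1 htwo)
  lia

/-- The map `f` lists in cyclic order the vertices of a component of `H` which is a cycle. -/
structure IsCyclicEnumeration {V : Type*} (H : SimpleGraph V) {n : ℕ} (f : ZMod n → V) : Prop where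
  injective : f.Injective
  adj_iff : ∀ i w, H.Adj (f i) w ↔ w = f (i - 1) ∨ w = f (i + 1)

variable {V : Type*} {G H : SimpleGraph V} {N : ℕ} {f : ZMod (N + 3) → V} {v : V}

lemma exists_isCyclicEnumeration [Finite V] (hH : H.IsCycles) (hv : (H.neighborSet v).Nonempty) :
    ∃ (N : ℕ) (f : ZMod (N + 3) → V), IsCyclicEnumeration H f ∧ v ∈ Set.range f := by
  obtain ⟨p, hp, -⟩ := hH.exists_cycle_toSubgraph_verts_eq_connectedComponentSupp
    (SimpleGraph.ConnectedComponent.connectedComponentMk_mem (v := v)) hv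
  obtain ⟨N, hN⟩ := Nat.exists_eq_add_of_le' hp.three_le_length
  let f (i : ZMod (N + 3)) : V := p.getVert i.val
  have hinj : f.Injective := fun i j hij ↦ ZMod.val_injective _ <| by
    have hi := i.val_lt
    have hj := j.val_lt
    exact hp.getVert_injOn' (by simp only [Set.mem_ofPred_eq]; lia)
      (by simp only [Set.mem_ofPred_eq]; lia) hij
  have hadj (i : ZMod (N + 3)) : H.Adj (f i) (f (i + 1)) := by
    simp only [f]
    rw [seq_val_add_one (f := p.getVert) (by lia) (by rw [← hN]; simp)]
    exact p.adj_getVert_succ (by rw [hN]; exact i.val_lt)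
  refine ⟨N, f, ⟨hinj, fun i w ↦ ?_⟩, 0, by simp [f]⟩
  have hsub : {f (i - 1), f (i + 1)} ⊆ H.neighborSet (f i) := by
    rintro w (rfl | rfl)
    · simpa using (hadj (i - 1)).symm
    · exact hadj i
  have heq : {f (i - 1), f (i + 1)} = H.neighborSet (f i) := by
    refine Set.eq_of_subset_of_ncard_le hsub ?_
    rw [hH ⟨_, hadj i⟩, Set.ncard_pair (hinj.ne (sub_one_ne_add_one i))]
  rw [← SimpleGraph.mem_neighborSet, ← heq, Set.mem_insert_iff, Set.mem_singleton_iff]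

namespace IsCyclicEnumeration

lemma adj_add_one (hf : IsCyclicEnumeration H f) (i : ZMod (N + 3)) : H.Adj (f i) (f (i + 1)) :=
  (hf.adj_iff _ _).2 (Or.inr rfl)

lemma mem_range_of_reachable (hf : IsCyclicEnumeration H f) {u : V} (h : H.Reachable u v)
    (hu : u ∈ Set.range f) : v ∈ Set.range f := by
  refine mem_of_reachable h ?_ hu
  rintro _ ⟨i, rfl⟩ w hw
  rcases (hf.adj_iff i w).1 hw with rfl | rfl <;> exact Set.mem_range_self _

lemma reachable (hf : IsCyclicEnumeration H f) (i j : ZMod (N + 3)) :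
    H.Reachable (f i) (f j) := by
  by_contra hj
  obtain ⟨k, hk, hk'⟩ :=
    exists_and_not_succ (Q := fun k ↦ H.Reachable (f i) (f k)) ⟨i, .rfl⟩ ⟨j, hj⟩
  exact hk' (hk.trans (hf.adj_add_one k).reachable)

lemma supp_connectedComponentMk (hf : IsCyclicEnumeration H f) (i : ZMod (N + 3)) :
    (H.connectedComponentMk (f i)).supp = Set.range f := by
  ext v
  rw [SimpleGraph.ConnectedComponent.mem_supp_iff, SimpleGraph.ConnectedComponent.eq]
  refine ⟨fun h ↦ hf.mem_range_of_reachable h.symm ⟨i, rfl⟩, ?_⟩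
  rintro ⟨j, rfl⟩
  exact hf.reachable j i

lemma nonempty_iso_cycleGraph (hf : IsCyclicEnumeration H f) (hH : H.Connected) :
    Nonempty (H ≃g SimpleGraph.cycleGraph (N + 3)) := by
  have hsurj : f.Surjective := fun v ↦ hf.mem_range_of_reachable (hH (f 0) v) ⟨0, rfl⟩
  have hadj (a b : ZMod (N + 3)) : H.Adj (f a) (f b) ↔ a - b = 1 ∨ b - a = 1 := by
    rw [hf.adj_iff, hf.injective.eq_iff, hf.injective.eq_iff, eq_sub_iff_add_eq, sub_eq_iff_eq_add',
      sub_eq_iff_eq_add', eq_comm (a := b + 1)]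
  exact ⟨.symm ⟨Equiv.ofBijective f ⟨hf.injective, hsurj⟩, fun {a b} ↦ hadj a b⟩⟩

lemma exists_bridgeGraph_adj (hf : IsCyclicEnumeration (nonbridgeGraph G) f) (hG : G.Connected)
    (hnotcycle : ∀ m, 3 ≤ m → IsEmpty (G ≃g SimpleGraph.cycleGraph m)) :
    ∃ i w, (bridgeGraph G).Adj (f i) w := by
  by_contra! hno
  have hfG : IsCyclicEnumeration G f := ⟨hf.injective, fun i w ↦ by
    rw [← hf.adj_iff, nonbridgeGraph_adj, iff_self_and]
    exact fun h h' ↦ hno i w (bridgeGraph_adj.2 ⟨h, h'⟩)⟩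
  obtain ⟨φ⟩ := hfG.nonempty_iso_cycleGraph hG
  exact (hnotcycle _ (by lia)).false φ

end IsCyclicEnumeration

end CyclicEnumeration

section NearestVertex

variable {V : Type*} {G : SimpleGraph V}

lemma exists_adj_dist_lt (hG : G.Connected) {r v : V} (h : v ≠ r) :
    ∃ u, G.Adj v u ∧ G.dist r u < G.dist r v := by
  obtain ⟨p, hp⟩ := hG.exists_walk_length_eq_dist v r
  cases p with
  | nil => exact absurd rfl h
  | @cons _ u _ hvu q =>
    refine ⟨u, hvu, ?_⟩
    have := SimpleGraph.dist_le q
    rw [SimpleGraph.Walk.length_cons] at hp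
    rw [SimpleGraph.dist_comm (u := r), SimpleGraph.dist_comm (u := r)]
    lia

-- The vertex nearest to `r` has this property.
lemma IsSpecialCactus.exists_forall_isFarEnd [Finite V] (hG : IsSpecialCactus G) {r : V}
    (hr : ∀ v w, G.Adj r v → G.Adj r w → G.IsBridge s(r, w) → v = w) {N : ℕ} {f : ZMod (N + 3) → V}
    (hf : IsCyclicEnumeration (nonbridgeGraph G) f) :
    ∃ i, ∀ w, (bridgeGraph G).Adj (f i) w → OnCycle G w → IsFarEnd G r (f i) := by
  obtain ⟨i, hi⟩ := Finite.exists_min fun i ↦ G.dist r (f i)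
  have hon : OnCycle G (f i) := ⟨_, hf.adj_add_one i⟩
  refine ⟨i, fun w hw hwC ↦ ⟨hon, ?_⟩⟩
  rcases eq_or_ne (f i) r with rfl | hne
  · obtain ⟨hadj, hbridge⟩ := bridgeGraph_adj.1 hw
    obtain ⟨hadj', hnot⟩ := nonbridgeGraph_adj.1 (hf.adj_add_one i)
    exact absurd (hr _ _ hadj' hadj hbridge ▸ hbridge) hnot
  obtain ⟨u, hu, hlt⟩ := exists_adj_dist_lt hG.connected hne
  have hbridge : (bridgeGraph G).Adj (f i) u := by
    rw [bridgeGraph_adj]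
    refine ⟨hu, by_contra fun hnot ↦ ?_⟩
    rcases (hf.adj_iff i u).1 (nonbridgeGraph_adj.2 ⟨hu, hnot⟩) with rfl | rfl
    · exact (hi (i - 1)).not_gt hlt
    · exact (hi (i + 1)).not_gt hlt
  obtain rfl := hG.bridgeGraph_adj_unique hon hw hbridge
  exact ⟨w, hw, hwC, hlt⟩

end NearestVertex

section LocalSolutions

variable {V : Type*} {G : SimpleGraph V} {t : V → Bool} {v w : V}

/-- The kind of the end `v` of the bridge `vw` if the ends of the bridges are labelled by `t`: the
weight of `v` in the colour of the bridge is to be even if `v` is labelled `false`, and odd or `4`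
otherwise, but `4` is excluded if `w` may have this weight as well. -/
noncomputable def bridgeKind (G : SimpleGraph V) (t : V → Bool) (v w : V) : VertexKind :=
  if t v then if OnCycle G w then odd else flexible else even

/-- The kind of a cycle vertex `v`, determined by its bridge if there is one. -/
noncomputable def attachedKind (G : SimpleGraph V) (t : V → Bool) (v : V) : VertexKind :=
  if h : ∃ w, (bridgeGraph G).Adj v w then bridgeKind G t v h.choose else free

lemma bridgeKind_ne_free : bridgeKind G t v w ≠ free := by
  unfold bridgeKind
  split_ifs <;> simp

lemma attachedKind_ne_free_iff : attachedKind G t v ≠ free ↔ ∃ w, (bridgeGraph G).Adj v w := by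
  unfold attachedKind
  split_ifs with h <;> simp [h, bridgeKind_ne_free]

lemma attachedKind_eq_bridgeKind [Finite V] (hG : IsSpecialCactus G) (hv : OnCycle G v)
    (hw : (bridgeGraph G).Adj v w) : attachedKind G t v = bridgeKind G t v w := by
  have h : ∃ w, (bridgeGraph G).Adj v w := ⟨w, hw⟩
  rw [attachedKind, dif_pos h, hG.bridgeGraph_adj_unique hv h.choose_spec hw]

lemma ne_of_admits_bridgeKind (ht : t v ≠ t w) {x y : ℕ} (hx : (bridgeKind G t v w).Admits x)
    (hx₄ : x = 4 → OnCycle G v) (hy : (bridgeKind G t w v).Admits y)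
    (hy₄ : y = 4 → OnCycle G w) : x ≠ y := by
  rintro rfl
  unfold bridgeKind at hx hy
  split_ifs at hx hy <;> simp_all [Admits] <;> lia

variable [Fintype V]

/-- The doubled edges `D` and the half-edge colouring `c` solve the problem at the vertices in `S`:
the weights of the ends of non-bridges are distinct, and those of the ends of bridges are of the
kind which the labelling `t` prescribes. -/
structure IsLocalSolution (G : SimpleGraph V) (t : V → Bool) (S : Set V) (D : Set (Sym2 V))
    (c : V → V → Bool) : Prop where
  subsingleton : D.Subsingleton
  subset_edgeSet : D ⊆ (nonbridgeGraph G).edgeSet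
  mem_of_mem : ∀ e ∈ D, ∀ v ∈ e, v ∈ S
  symm : ∀ v ∈ S, ∀ w, (nonbridgeGraph G).Adj v w → c v w = c w v
  dartDegree_ne : ∀ v ∈ S, ∀ w, (nonbridgeGraph G).Adj v w →
    dartDegree G D c (c v w) v ≠ dartDegree G D c (c v w) w
  admits : ∀ v ∈ S, ∀ w, (bridgeGraph G).Adj v w →
    (bridgeKind G t v w).Admits (dartDegree G D c (c v w) v)
  onCycle : ∀ v ∈ S, ∀ w, (bridgeGraph G).Adj v w →
    dartDegree G D c (c v w) v = 4 → OnCycle G v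

lemma dartDegree_empty {κ : Type*} (c : V → V → κ) (b : κ) :
    dartDegree G ∅ c b v = #{w | G.Adj v w ∧ c v w = b} := by
  simp [dartDegree]

lemma dartDegree_const {κ : Type*} (b : κ) : dartDegree G ∅ (fun _ _ ↦ b) b v = ndeg G v := by
  simp [dartDegree_empty, ndeg, Set.ncard_eq_toFinset_card']

lemma exists_dartDegree_eq_one (hdeg : ndeg G v ≤ 2) :
    ∃ c : V → V → Bool, ∀ w, G.Adj v w → dartDegree G ∅ c (c v w) v = 1 := by
  have hcard : Fintype.card {w | G.Adj v w} ≤ Fintype.card Bool := by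
    rwa [Fintype.card_bool, ← Nat.card_eq_fintype_card]
  obtain ⟨f, hf⟩ : ∃ f : V → Bool, {w | G.Adj v w}.InjOn f :=
    Set.exists_injOn_iff_injective.2
      ⟨_, (Function.Embedding.nonempty_of_card_le hcard).some.injective⟩
  refine ⟨fun _ ↦ f, fun w hw ↦ ?_⟩
  rw [dartDegree_empty, card_eq_one]
  refine ⟨w, ext fun u ↦ ?_⟩
  simp only [mem_filter_univ, mem_singleton]
  exact ⟨fun hu ↦ hf hu.1 hw hu.2, by rintro rfl; exact ⟨hw, rfl⟩⟩

lemma exists_isLocalSolution_singleton (hv : ¬ OnCycle G v) (hdeg : ndeg G v ≤ 2)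
    (hleaf : ndeg G v = 1 → t v = true) : ∃ D c, IsLocalSolution G t {v} D c := by
  suffices ∃ c : V → V → Bool, ∀ w, G.Adj v w →
      dartDegree G ∅ c (c v w) v = if t v then 1 else 2 by
    obtain ⟨c, hc⟩ := this
    have hadj {w : V} : ¬ (nonbridgeGraph G).Adj v w := fun h ↦ hv ⟨w, h⟩
    refine ⟨∅, c, Set.subsingleton_empty, Set.empty_subset _, by simp, ?_, ?_, ?_, ?_⟩ <;>
      rintro _ rfl w hw
    · exact absurd hw hadj
    · exact absurd hw hadj
    · rw [hc w (bridgeGraph_adj.1 hw).1, bridgeKind]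
      split_ifs <;> simp [Admits]
    · rw [hc w (bridgeGraph_adj.1 hw).1]
      split_ifs <;> simp
  cases ht : t v
  · refine ⟨fun _ _ ↦ true, fun w hw ↦ ?_⟩
    have hpos : 0 < ndeg G v := (Set.ncard_pos (Set.toFinite _)).2 ⟨w, hw⟩
    have : ndeg G v ≠ 1 := fun h ↦ by simp [hleaf h] at ht
    simp only [dartDegree_const, Bool.false_eq_true, if_false]
    lia
  · simpa using exists_dartDegree_eq_one hdeg

end LocalSolutions

section CycleSolution

variable {V : Type*} {G H : SimpleGraph V} {N : ℕ} {f : ZMod (N + 3) → V}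

/-- The edge of an enumerated cycle that enters its `i`-th vertex. -/
def cycleEdge {n : ℕ} (f : ZMod n → V) (i : ZMod n) : Sym2 V := s(f (i - 1), f i)

namespace IsCyclicEnumeration

lemma cycleEdge_mem_edgeSet (hf : IsCyclicEnumeration H f) (i : ZMod (N + 3)) :
    cycleEdge f i ∈ H.edgeSet := by
  simpa [cycleEdge] using hf.adj_add_one (i - 1)

lemma cycleEdge_injective (hf : IsCyclicEnumeration H f) : (cycleEdge f).Injective := by
  intro i j hij
  rcases Sym2.eq_iff.1 hij with ⟨-, h⟩ | ⟨h, h'⟩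
  · exact hf.injective h
  · obtain rfl := hf.injective h'
    exact absurd ((hf.injective h).trans (sub_add_cancel j 1).symm) (sub_one_ne_add_one (j - 1))

lemma exists_halfEdgeColoring (hf : IsCyclicEnumeration (nonbridgeGraph G) f)
    (e γ : ZMod (N + 3) → Bool) :
    ∃ c : V → V → Bool, (∀ v w, (nonbridgeGraph G).Adj v w → c v w = c w v) ∧
      (∀ i, c (f (i - 1)) (f i) = e i) ∧ ∀ i w, (bridgeGraph G).Adj (f i) w → c (f i) w = γ i := by
  refine ⟨fun v w ↦ if (nonbridgeGraph G).Adj v w then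
    Function.extend (cycleEdge f) e default s(v, w) else Function.extend f γ default v,
    fun v w h ↦ ?_, fun i ↦ ?_, fun i w h ↦ ?_⟩
  · simp only [h, h.symm, if_true, Sym2.eq_swap (a := v)]
  · have h : (nonbridgeGraph G).Adj (f (i - 1)) (f i) := hf.cycleEdge_mem_edgeSet i
    simp only [h, if_true]
    exact hf.cycleEdge_injective.extend_apply e default i
  · have h' : ¬ (nonbridgeGraph G).Adj (f i) w :=
      SimpleGraph.disjoint_left.1 disjoint_bridgeGraph_nonbridgeGraph _ _ h
    simp only [h', if_false]
    exact hf.injective.extend_apply γ default i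

end IsCyclicEnumeration

section DartDegree

variable [Fintype V] {κ : Type*} {D : Set (Sym2 V)} {c : V → V → κ} {b : κ} {v : V}

lemma dartDegree_sup {G₁ G₂ : SimpleGraph V} (h : Disjoint G₁ G₂) :
    dartDegree (G₁ ⊔ G₂) D c b v = dartDegree G₁ D c b v + dartDegree G₂ D c b v := by
  rw [dartDegree, dartDegree, dartDegree, ← sum_union]
  · simp only [SimpleGraph.sup_adj, or_and_right, filter_or]
  · simp only [disjoint_filter]
    exact fun w _ hw hw' ↦ SimpleGraph.disjoint_left.1 h v w hw.1 hw'.1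

lemma dartDegree_eq_sum {S : Finset V} (h : ∀ w, G.Adj v w ↔ w ∈ S) :
    dartDegree G D c b v =
      ∑ w ∈ S, if c v w = b then if s(v, w) ∈ D then 2 else 1 else 0 := by
  rw [dartDegree, ← sum_filter]
  congr 1
  ext w
  simp [h]

lemma dartDegree_bridgeGraph (hG : IsSpecialCactus G) (t : V → Bool) {γ : κ} (hv : OnCycle G v)
    (hD : D ⊆ (nonbridgeGraph G).edgeSet) (hγ : ∀ w, (bridgeGraph G).Adj v w → c v w = γ) :
    dartDegree (bridgeGraph G) D c b v = if attachedKind G t v ≠ free ∧ γ = b then 1 else 0 := by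
  by_cases h : ∃ w, (bridgeGraph G).Adj v w
  · obtain ⟨w, hw⟩ := h
    have hadj (u : V) : (bridgeGraph G).Adj v u ↔ u ∈ ({w} : Finset V) := by
      rw [mem_singleton]
      exact ⟨fun hu ↦ hG.bridgeGraph_adj_unique hv hu hw, by rintro rfl; exact hw⟩
    have hnot : s(v, w) ∉ D := fun hvw ↦
      SimpleGraph.disjoint_left.1 disjoint_bridgeGraph_nonbridgeGraph _ _ hw (hD hvw)
    rw [dartDegree_eq_sum hadj, sum_singleton, hγ w hw, if_neg hnot]
    simp only [ne_eq, attachedKind_ne_free_iff.2 ⟨w, hw⟩, not_false_eq_true, true_and]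
  · rw [dartDegree_eq_sum (S := ∅) (by simpa using h), sum_empty,
      if_neg fun h' ↦ h (attachedKind_ne_free_iff.1 h'.1)]

lemma IsCyclicEnumeration.dartDegree_eq_add (hf : IsCyclicEnumeration H f)
    {D : Set (ZMod (N + 3))} {e : ZMod (N + 3) → κ} (hsymm : ∀ v w, H.Adj v w → c v w = c w v)
    (hedge : ∀ i, c (f (i - 1)) (f i) = e i) (i : ZMod (N + 3)) :
    dartDegree H (cycleEdge f '' D) c b (f i) =
      (if e i = b then edgeWeight D i else 0) +
        if e (i + 1) = b then edgeWeight D (i + 1) else 0 := by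
  have hmem (j : ZMod (N + 3)) : s(f (j - 1), f j) ∈ cycleEdge f '' D ↔ j ∈ D :=
    hf.cycleEdge_injective.mem_set_image
  have hmem_next : s(f i, f (i + 1)) ∈ cycleEdge f '' D ↔ i + 1 ∈ D := by
    simpa using hmem (i + 1)
  have hprev : c (f i) (f (i - 1)) = e i := by
    rw [hsymm _ _ ((hf.adj_iff _ _).2 (Or.inl rfl)), hedge]
  have hnext : c (f i) (f (i + 1)) = e (i + 1) := by simpa using hedge (i + 1)
  rw [dartDegree_eq_sum (S := {f (i - 1), f (i + 1)}) (by simpa using hf.adj_iff i),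
    sum_pair (hf.injective.ne (sub_one_ne_add_one i)), hprev, hnext, Sym2.eq_swap]
  simp only [hmem, hmem_next, edgeWeight]

end DartDegree

variable [Fintype V] {t : V → Bool}

lemma IsCyclicEnumeration.dartDegree_eq_weight (hG : IsSpecialCactus G)
    (hf : IsCyclicEnumeration (nonbridgeGraph G) f) {D : Set (ZMod (N + 3))} {c : V → V → Bool}
    {e γ : ZMod (N + 3) → Bool} (hsymm : ∀ v w, (nonbridgeGraph G).Adj v w → c v w = c w v)
    (hedge : ∀ i, c (f (i - 1)) (f i) = e i)
    (hbridge : ∀ i w, (bridgeGraph G).Adj (f i) w → c (f i) w = γ i) (b : Bool)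
    (i : ZMod (N + 3)) :
    dartDegree G (cycleEdge f '' D) c b (f i) = (attachedKind G t (f i)).weight (edgeWeight D i)
      (edgeWeight D (i + 1)) (e i) (e (i + 1)) (γ i) b := by
  have hD : cycleEdge f '' D ⊆ (nonbridgeGraph G).edgeSet :=
    Set.image_subset_iff.2 fun j _ ↦ hf.cycleEdge_mem_edgeSet j
  conv_lhs => rw [← bridgeGraph_sup_nonbridgeGraph (G := G)]
  rw [dartDegree_sup disjoint_bridgeGraph_nonbridgeGraph, hf.dartDegree_eq_add hsymm hedge,
    dartDegree_bridgeGraph hG t ⟨_, hf.adj_add_one i⟩ hD (hbridge i), weight, add_comm]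
  congr!

lemma IsCyclicEnumeration.exists_isLocalSolution_range (hG : IsSpecialCactus G)
    (hf : IsCyclicEnumeration (nonbridgeGraph G) f)
    (hfree : ∃ i, attachedKind G t (f i) ≠ free) (hodd : ∃ i, attachedKind G t (f i) ≠ odd) :
    ∃ D c, IsLocalSolution G t (Set.range f) D c := by
  obtain ⟨D, hD, s, hs⟩ := cycleColorable hfree hodd
  choose γ hadmits hne heq using hs
  obtain ⟨c, hsymm, hedge, hbridge⟩ := hf.exists_halfEdgeColoring (fun i ↦ (s i).1) γ
  have hdeg := hf.dartDegree_eq_weight hG (t := t) (D := D) hsymm hedge hbridge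
  have hnext (i : ZMod (N + 3)) : c (f i) (f (i + 1)) = (s (i + 1)).1 := by
    simpa using hedge (i + 1)
  have hsucc (i : ZMod (N + 3)) :
      dartDegree G (cycleEdge f '' D) c (c (f i) (f (i + 1))) (f i) ≠
        dartDegree G (cycleEdge f '' D) c (c (f i) (f (i + 1))) (f (i + 1)) := by
    rw [hnext, hdeg, hdeg, heq]
    exact (hne (i + 1)).symm
  refine ⟨cycleEdge f '' D, c, hD.image _,
    Set.image_subset_iff.2 fun i _ ↦ hf.cycleEdge_mem_edgeSet i, ?_, fun v _ ↦ hsymm v, ?_, ?_, ?_⟩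
  · rintro _ ⟨i, -, rfl⟩ v hv
    rcases Sym2.mem_iff.1 hv with rfl | rfl <;> exact Set.mem_range_self _
  · rintro _ ⟨i, rfl⟩ w hw
    rcases (hf.adj_iff i w).1 hw with rfl | rfl
    · rw [hsymm _ _ hw]
      simpa using (hsucc (i - 1)).symm
    · exact hsucc i
  · rintro _ ⟨i, rfl⟩ w hw
    rw [hbridge i w hw, hdeg, ← attachedKind_eq_bridgeKind hG ⟨_, hf.adj_add_one i⟩ hw]
    exact hadmits i
  · rintro _ ⟨i, rfl⟩ w - -
    exact ⟨_, hf.adj_add_one i⟩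

end CycleSolution

section Assembly

variable {V : Type*} [Fintype V] {G : SimpleGraph V} {t : V → Bool}

lemma IsSpecialCactus.exists_isLocalSolution_supp (hG : IsSpecialCactus G)
    (hnotcycle : ∀ m, 3 ≤ m → IsEmpty (G ≃g SimpleGraph.cycleGraph m)) {r : V}
    (hr : ∀ v w, G.Adj r v → G.Adj r w → G.IsBridge s(r, w) → v = w)
    (hleaf : ∀ v, ndeg G v = 1 → t v = true) (hfar : ∀ v, IsFarEnd G r v → t v = false)
    (K : (nonbridgeGraph G).ConnectedComponent) : ∃ D c, IsLocalSolution G t K.supp D c := by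
  induction K using SimpleGraph.ConnectedComponent.ind with | _ v
  by_cases hv : OnCycle G v
  · obtain ⟨N, f, hf, i, rfl⟩ := exists_isCyclicEnumeration hG.isCycles hv
    rw [hf.supp_connectedComponentMk]
    refine hf.exists_isLocalSolution_range hG ?_ ?_
    · obtain ⟨j, hj⟩ := hf.exists_bridgeGraph_adj hG.connected hnotcycle
      exact ⟨j, attachedKind_ne_free_iff.2 hj⟩
    · obtain ⟨j, hj⟩ := hG.exists_forall_isFarEnd hr hf
      refine ⟨j, fun hodd ↦ ?_⟩
      obtain ⟨w, hw⟩ := attachedKind_ne_free_iff.1 (hodd.trans_ne (by simp))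
      rw [attachedKind_eq_bridgeKind hG ⟨_, hf.adj_add_one j⟩ hw, bridgeKind] at hodd
      have hwC : OnCycle G w := by
        by_contra hwC
        simp only [hwC, if_false] at hodd
        split_ifs at hodd
      simp [hfar _ (hj w hw hwC)] at hodd
  · rw [supp_connectedComponentMk_of_not_onCycle hv]
    exact exists_isLocalSolution_singleton hv (hG.ndeg_le_two v hv) (hleaf v)

lemma exists_dartDegree_ne_of_isLocalSolution (t : (bridgeGraph G).Coloring Bool)
    (h : ∀ K : (nonbridgeGraph G).ConnectedComponent, ∃ D c, IsLocalSolution G t K.supp D c) :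
    ∃ (E : Finset (Sym2 V)) (c : V → V → Bool), ↑E ⊆ (nonbridgeGraph G).edgeSet ∧
      (∀ e ∈ E, ∀ f ∈ E, ∀ v ∈ e, ∀ w ∈ f, (nonbridgeGraph G).Reachable v w → e = f) ∧
      (∀ v w, (nonbridgeGraph G).Adj v w → c v w = c w v) ∧
      ∀ v w, G.Adj v w → dartDegree G E c (c v w) v ≠ dartDegree G E c (c w v) w := by
  choose D c h using h
  let κ := (nonbridgeGraph G).connectedComponentMk
  have hκ {v w : V} (hvw : (nonbridgeGraph G).Reachable v w) : κ v = κ w :=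
    SimpleGraph.ConnectedComponent.sound hvw
  let E : Finset (Sym2 V) := {e | ∃ K, e ∈ D K}
  have hE {e : Sym2 V} (v : V) (hv : v ∈ e) : e ∈ E ↔ e ∈ D (κ v) := by
    rw [mem_filter_univ]
    refine ⟨fun ⟨K, he⟩ ↦ ?_, fun he ↦ ⟨_, he⟩⟩
    rwa [show κ v = K from (h K).mem_of_mem e he v hv]
  have hdeg (b : Bool) (v : V) :
      dartDegree G E (fun v ↦ c (κ v) v) b v = dartDegree G (D (κ v)) (c (κ v)) b v := by
    simp only [dartDegree, mem_coe, hE v (Sym2.mem_mk_left v _)]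
    congr!
  refine ⟨E, fun v ↦ c (κ v) v, fun e he ↦ ?_, fun e he f hf v hv w hw hvw ↦ ?_,
    fun v w hvw ↦ ?_, fun v w hvw ↦ ?_⟩
  · obtain ⟨K, hK⟩ := (mem_filter_univ _).1 he
    exact (h K).subset_edgeSet hK
  · exact (h (κ v)).subsingleton ((hE v hv).1 he) (hκ hvw ▸ (hE w hw).1 hf)
  · simpa only [hκ hvw.reachable] using (h (κ v)).symm v rfl w hvw
  · simp only [hdeg]
    by_cases hb : G.IsBridge s(v, w)
    · have hvw := bridgeGraph_adj.2 ⟨hvw, hb⟩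
      exact ne_of_admits_bridgeKind (t.valid hvw) ((h _).admits v rfl w hvw)
        ((h _).onCycle v rfl w hvw) ((h _).admits w rfl v hvw.symm)
        ((h _).onCycle w rfl v hvw.symm)
    · have hvw := nonbridgeGraph_adj.2 ⟨hvw, hb⟩
      rw [← hκ hvw.reachable, ← (h _).symm v rfl w hvw]
      exact (h _).dartDegree_ne v rfl w hvw

end Assembly

end SpecialCactus

open SpecialCactus

/-- A non-cycle member of the family `𝔗*`: a connected graph that contains a cycle,
is not itself a cycle, every edge lies on at most one cycle, the maximum degree is at
most `3`, and every vertex of degree `3` lies on a cycle.  If `k = |E| - |V| + 1` is the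
number of cycles of `G`, then there is a matching `E_d` of at most `k` non-pendant edges
and a coloring `c` such that `(E_d, c)` is a valid doubling-coloring of `G`. -/
theorem Dlir_special_cacti {V : Type*} [Fintype V] (G : SimpleGraph V)
    (hconn : G.Connected)
    (hcyc : ∃ (u : V) (p : G.Walk u u), p.IsCycle)
    (hnotcycle : ∀ m : ℕ, 3 ≤ m → IsEmpty (G ≃g SimpleGraph.cycleGraph m))
    (hcactus : ∀ (e : Sym2 V) (u v : V) (p : G.Walk u u) (q : G.Walk v v),
      p.IsCycle → q.IsCycle → e ∈ p.edges → e ∈ q.edges →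
      ∀ f : Sym2 V, f ∈ p.edges ↔ f ∈ q.edges)
    (hdeg3 : ∀ v, ndeg G v ≤ 3)
    (hdeg3cyc : ∀ v, ndeg G v = 3 →
      ∃ (u : V) (p : G.Walk u u), p.IsCycle ∧ v ∈ p.support)
    (k : ℕ) (hk : k = G.edgeSet.ncard + 1 - Fintype.card V) :
    ∃ (E_d : Finset (Sym2 V)) (c : Sym2 V → Fin 2),
      ValidDC G E_d c ∧
      E_d.card ≤ k ∧
      (∀ e ∈ E_d, ∀ f ∈ E_d, e ≠ f → ∀ x : V, x ∈ e → x ∉ f) ∧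
      (∀ e ∈ E_d, ∀ x : V, x ∈ e → 2 ≤ ndeg G x) := by
  have hG := isSpecialCactus hconn hcyc hcactus hdeg3 hdeg3cyc
  obtain ⟨r, hr⟩ := exists_forall_isBridge_eq hconn
  obtain ⟨t, hleaf, hfar⟩ := hG.exists_coloring_bridgeGraph r
  obtain ⟨E, c, hE, heq, hsymm, hne⟩ := exists_dartDegree_ne_of_isLocalSolution t
    (hG.exists_isLocalSolution_supp hnotcycle hr hleaf hfar)
  have hnonbridge : ∀ e ∈ E, e ∈ G.edgeSet ∧ ¬ G.IsBridge e := fun e he ↦ by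
    simpa [nonbridgeGraph] using hE he
  obtain ⟨c', hc'⟩ := exists_validDC_of_dart (fun e he ↦ (hnonbridge e he).1) c
    (fun u v huv hb ↦ hsymm u v (nonbridgeGraph_adj.2 ⟨huv, hb⟩)) hne
  refine ⟨E, c', hc', hk ▸ card_le_cyclomatic_number hconn E hnonbridge ?_, ?_, ?_⟩
  · exact fun u p hp e he f hf hep hfp ↦
      heq e he f hf _ e.out_fst_mem _ f.out_fst_mem (reachable_nonbridgeGraph_of_isCycle hp
        (p.mem_support_of_mem_edges hep e.out_fst_mem)
        (p.mem_support_of_mem_edges hfp f.out_fst_mem))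
  · exact fun e he f hf hef x hxe hxf ↦ hef (heq e he f hf x hxe x hxf .rfl)
  · exact fun e he x hx ↦ hG.two_le_ndeg (onCycle_of_mem (hE he) hx)
end

section
/- Let G be a simple graph containing eight distinct vertices x0, x1, y0, y1, y2, z0, z1, z2 such that x0y0, x0z0, y0z0, x0x1, y0y1, y1y2, z0z1, z1z2 are edges of G, and such that in G the degrees satisfy deg(x0) = deg(y0) = deg(z0) = 3, deg(y1) = deg(z1) = 2 and deg(y2) = deg(z2) = 1. Then every valid doubling-coloring (D, c) of G satisfies D ∩ {x0y0, x0z0, y0z0, x0x1, y0y1, y1y2, z0z1, z1z2} ≠ ∅. -/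
open Finset
open scoped Classical

/-!
Work with weighted degrees that count edges, as they do at a vertex meeting no doubled edge. A
leaf has weighted degree 1 in the color of its edge, so on a pendant path `y₀y₁y₂` both edges have
the same color `p` and `y₁` has weight 2 in it. Hence `y₀`, of degree 3, has weight 1 or 3 in color
`p`, which means that its other two edges share a color. Applied at `y₀` and `z₀`, this makes the
triangle monochromatic. In its color all three vertices then have weight 2 or 3, so two of them,
which are adjacent in that color, have equal weights.
-/

/-- No edge of `G` at `v` is doubled, so that the weighted degrees of `v` count edges. -/
def UndoubledAt {V : Type*} (G : SimpleGraph V) (D : Finset (Sym2 V)) (v : V) : Prop :=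
  ∀ w, G.Adj v w → s(v, w) ∉ D

lemma undoubledAt_of_ndeg_le_card {V : Type*} [Finite V] {G : SimpleGraph V}
    {D : Finset (Sym2 V)} {v : V} {S : Finset V} (hS : ∀ w ∈ S, G.Adj v w)
    (hcard : ndeg G v ≤ #S) (hD : ∀ w ∈ S, s(v, w) ∉ D) : UndoubledAt G D v := by
  have hSeq : (S : Set V) = {w | G.Adj v w} :=
    Set.eq_of_subset_of_ncard_le hS (by rwa [Set.ncard_coe_finset])
  exact fun w hw => hD w (mem_coe.1 (hSeq.symm.subset hw))

section

variable {V : Type*} [Fintype V] {G : SimpleGraph V} {D : Finset (Sym2 V)} {c : Sym2 V → Fin 2}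
  {i : Fin 2} {v : V}

lemma ndeg_eq_card : ndeg G v = #{w | G.Adj v w} := by
  rw [ndeg, ← Set.ncard_coe_finset, coe_filter_univ]

lemma card_le_wdeg {S : Finset V} (hS : ∀ w ∈ S, G.Adj v w ∧ c s(v, w) = i) :
    #S ≤ wdeg G D c i v := by
  calc #S ≤ #{w | G.Adj v w ∧ c s(v, w) = i} :=
        card_le_card fun w hw => (mem_filter_univ w).2 (hS w hw)
    _ = ∑ w with G.Adj v w ∧ c s(v, w) = i, 1 := card_eq_sum_ones _
    _ ≤ wdeg G D c i v := sum_le_sum fun w _ => by split_ifs <;> omega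

namespace UndoubledAt

lemma wdeg_eq_card (hv : UndoubledAt G D v) :
    wdeg G D c i v = #{w | G.Adj v w ∧ c s(v, w) = i} := by
  rw [wdeg, card_eq_sum_ones]
  exact sum_congr rfl fun w hw => if_neg (hv w (mem_filter.1 hw).2.1)

lemma wdeg_le_ndeg (hv : UndoubledAt G D v) : wdeg G D c i v ≤ ndeg G v := by
  rw [hv.wdeg_eq_card, ndeg_eq_card]
  exact card_le_card (monotone_filter_right _ fun _ _ h => h.1)

lemma wdeg_lt_ndeg (hv : UndoubledAt G D v) {w : V} (hw : G.Adj v w) (hc : c s(v, w) ≠ i) :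
    wdeg G D c i v < ndeg G v := by
  rw [hv.wdeg_eq_card, ndeg_eq_card]
  refine card_lt_card ((ssubset_iff_of_subset ?_).2 ⟨w, by simpa using hw, by simp [hc]⟩)
  exact monotone_filter_right _ fun _ _ h => h.1

lemma wdeg_eq_two_of_color_ne (hv : UndoubledAt G D v) (hd : ndeg G v = 3) {a b t : V}
    (ha : G.Adj v a) (hb : G.Adj v b) (ht : G.Adj v t) (hat : a ≠ t) (hbt : b ≠ t)
    (hab : c s(v, a) ≠ c s(v, b)) : wdeg G D c (c s(v, t)) v = 2 := by
  wlog hca : c s(v, a) = c s(v, t) generalizing a b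
  · exact this hb ha hbt hat hab.symm (by omega)
  have hlt : wdeg G D c (c s(v, t)) v < 3 :=
    hd ▸ hv.wdeg_lt_ndeg hb fun hcb => hab (hca.trans hcb.symm)
  have hle : #{a, t} ≤ wdeg G D c (c s(v, t)) v := card_le_wdeg (by simp [ha, ht, hca])
  rw [card_pair hat] at hle
  omega

end UndoubledAt

namespace ValidDC

lemma wdeg_eq_two_of_pendant_path (h : ValidDC G D c) {y₀ y₁ y₂ : V} (h₀₁ : G.Adj y₀ y₁)
    (h₁₂ : G.Adj y₁ y₂) (hne : y₀ ≠ y₂) (hd₁ : ndeg G y₁ = 2) (hd₂ : ndeg G y₂ = 1)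
    (hD₀₁ : s(y₀, y₁) ∉ D) (hD₁₂ : s(y₁, y₂) ∉ D) : wdeg G D c (c s(y₀, y₁)) y₁ = 2 := by
  have hu₁ : UndoubledAt G D y₁ := undoubledAt_of_ndeg_le_card (S := {y₀, y₂})
    (by simp [h₀₁.symm, h₁₂]) (by simp [hd₁, hne]) (by simp [Sym2.eq_swap (a := y₁) (b := y₀), *])
  have hu₂ : UndoubledAt G D y₂ := undoubledAt_of_ndeg_le_card (S := {y₁})
    (by simp [h₁₂.symm]) (by simp [hd₂]) (by simpa [Sym2.eq_swap] using hD₁₂)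
  have hlb₁ : 1 ≤ wdeg G D c (c s(y₁, y₂)) y₁ := card_le_wdeg (S := {y₂}) (by simp [h₁₂])
  have hlb₂ : 1 ≤ wdeg G D c (c s(y₁, y₂)) y₂ :=
    card_le_wdeg (S := {y₁}) (by simp [h₁₂.symm, Sym2.eq_swap])
  have hub₁ : wdeg G D c (c s(y₁, y₂)) y₁ ≤ 2 := hd₁ ▸ hu₁.wdeg_le_ndeg
  have hub₂ : wdeg G D c (c s(y₁, y₂)) y₂ ≤ 1 := hd₂ ▸ hu₂.wdeg_le_ndeg
  have hne₁₂ : wdeg G D c (c s(y₁, y₂)) y₁ ≠ wdeg G D c (c s(y₁, y₂)) y₂ := h.2 _ _ h₁₂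
  have htwo : wdeg G D c (c s(y₁, y₂)) y₁ = 2 := by omega
  have hcolor : c s(y₀, y₁) = c s(y₁, y₂) := by
    by_contra hc
    have hlt := hu₁.wdeg_lt_ndeg h₀₁.symm (by rwa [Sym2.eq_swap])
    omega
  rw [hcolor, htwo]

lemma color_eq_of_pendant_path (h : ValidDC G D c) {y₀ y₁ y₂ a b : V} (h₀₁ : G.Adj y₀ y₁)
    (h₁₂ : G.Adj y₁ y₂) (hd₀ : ndeg G y₀ = 3) (hd₁ : ndeg G y₁ = 2)
    (hd₂ : ndeg G y₂ = 1) (hu₀ : UndoubledAt G D y₀) (hD₁₂ : s(y₁, y₂) ∉ D)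
    (ha : G.Adj y₀ a) (hb : G.Adj y₀ b) (hay : a ≠ y₁) (hby : b ≠ y₁) :
    c s(y₀, a) = c s(y₀, b) := by
  by_contra hab
  have hne : y₀ ≠ y₂ := by rintro rfl; omega
  have hy₀ : wdeg G D c (c s(y₀, y₁)) y₀ = 2 :=
    hu₀.wdeg_eq_two_of_color_ne hd₀ ha hb h₀₁ hay hby hab
  have hy₁ : wdeg G D c (c s(y₀, y₁)) y₁ = 2 :=
    h.wdeg_eq_two_of_pendant_path h₀₁ h₁₂ hne hd₁ hd₂ (hu₀ y₁ h₀₁) hD₁₂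
  exact h.2 _ _ h₀₁ (hy₀.trans hy₁.symm)

lemma two_mul_card_le_of_monochromatic_clique (h : ValidDC G D c) {K : Finset V} {d : ℕ}
    (hK : G.IsClique K) (hc : (K : Set V).Pairwise fun u v => c s(u, v) = i)
    (hu : ∀ v ∈ K, UndoubledAt G D v) (hd : ∀ v ∈ K, ndeg G v ≤ d) : 2 * #K ≤ d + 2 := by
  have hinj : Set.InjOn (wdeg G D c i) K := fun u hu v hv huv => by
    by_contra hne
    exact h.2 u v (hK hu hv hne) (by rwa [hc hu hv hne])
  have hmaps : Set.MapsTo (wdeg G D c i) K (Icc (#K - 1) d) := fun v hv => by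
    have hlow : #(K.erase v) ≤ wdeg G D c i v := card_le_wdeg fun w hw =>
      have hvw : v ≠ w := (ne_of_mem_erase hw).symm
      ⟨hK hv (mem_of_mem_erase hw) hvw, hc hv (mem_of_mem_erase hw) hvw⟩
    rw [card_erase_of_mem hv] at hlow
    exact mem_coe.2 (mem_Icc.2 ⟨hlow, (hu v hv).wdeg_le_ndeg.trans (hd v hv)⟩)
  have hcard := card_le_card_of_injOn _ hmaps hinj
  rw [Nat.card_Icc] at hcard
  omega

lemma not_monochromatic_triangle (h : ValidDC G D c) {x y z : V} (hxy : G.Adj x y)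
    (hxz : G.Adj x z) (hyz : G.Adj y z) (hx : UndoubledAt G D x) (hy : UndoubledAt G D y)
    (hz : UndoubledAt G D z) (hdx : ndeg G x ≤ 3) (hdy : ndeg G y ≤ 3) (hdz : ndeg G z ≤ 3) :
    ¬(c s(x, y) = c s(y, z) ∧ c s(x, z) = c s(y, z)) := by
  rintro ⟨hcxy, hcxz⟩
  have hcard : #{x, y, z} = 3 := card_eq_three.2 ⟨x, y, z, hxy.ne, hxz.ne, hyz.ne, rfl⟩
  have hclique : G.IsClique ({x, y, z} : Finset V) := by
    simpa using SimpleGraph.is3Clique_triple_iff.2 ⟨hxy, hxz, hyz⟩ |>.isClique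
  have hmono : (({x, y, z} : Finset V) : Set V).Pairwise fun u v => c s(u, v) = c s(y, z) := by
    have hsymm : Std.Symm fun u v => c s(u, v) = c s(y, z) := ⟨fun _ _ h => Sym2.eq_swap ▸ h⟩
    simp [Set.pairwise_insert_of_symm, *]
  have hbound := h.two_mul_card_le_of_monochromatic_clique hclique hmono (d := 3)
    (by simp [*]) (by simp [*])
  omega

end ValidDC

end

/-- If `G` contains a pendant triangle `x₀y₀z₀` whose vertices all have degree three,
with pendant paths `y₀y₁y₂` and `z₀z₁z₂` of length two and `x₁` the third neighbor of
`x₀`, then every valid doubling-coloring of `G` must double one of the listed edges. -/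
theorem doubling_on_pendant_triangle {V : Type*} [Fintype V] (G : SimpleGraph V)
    (x0 x1 y0 y1 y2 z0 z1 z2 : V)
    (hdist : List.Nodup [x0, x1, y0, y1, y2, z0, z1, z2])
    (hxy : G.Adj x0 y0) (hxz : G.Adj x0 z0) (hyz : G.Adj y0 z0)
    (hxx : G.Adj x0 x1) (hyy1 : G.Adj y0 y1) (hy12 : G.Adj y1 y2)
    (hzz1 : G.Adj z0 z1) (hz12 : G.Adj z1 z2)
    (hdx0 : ndeg G x0 = 3) (hdy0 : ndeg G y0 = 3) (hdz0 : ndeg G z0 = 3)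
    (hdy1 : ndeg G y1 = 2) (hdz1 : ndeg G z1 = 2)
    (hdy2 : ndeg G y2 = 1) (hdz2 : ndeg G z2 = 1) :
    ∀ (D : Finset (Sym2 V)) (c : Sym2 V → Fin 2), ValidDC G D c →
      (s(x0, y0) ∈ D ∨ s(x0, z0) ∈ D ∨ s(y0, z0) ∈ D ∨ s(x0, x1) ∈ D ∨
        s(y0, y1) ∈ D ∨ s(y1, y2) ∈ D ∨ s(z0, z1) ∈ D ∨ s(z1, z2) ∈ D) := by
  intro D c h
  by_contra hD
  simp only [not_or] at hD
  obtain ⟨hDxy, hDxz, hDyz, hDxx, hDyy, hDy12, hDzz, hDz12⟩ := hD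
  simp only [List.nodup_cons, List.mem_cons, List.not_mem_nil, or_false, not_or] at hdist
  have hx : UndoubledAt G D x0 := undoubledAt_of_ndeg_le_card (S := {y0, z0, x1})
    (by simp [*]) (by grind) (by simp [*])
  have hy : UndoubledAt G D y0 := undoubledAt_of_ndeg_le_card (S := {x0, z0, y1})
    (by simp [*, hxy.symm]) (by grind) (by simp [*, Sym2.eq_swap (a := y0) (b := x0)])
  have hz : UndoubledAt G D z0 := undoubledAt_of_ndeg_le_card (S := {x0, y0, z1})
    (by simp [*, hxz.symm, hyz.symm]) (by grind)
    (by simp [*, Sym2.eq_swap (a := z0) (b := x0), Sym2.eq_swap (a := z0) (b := y0)])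
  have hcy : c s(y0, x0) = c s(y0, z0) := h.color_eq_of_pendant_path hyy1 hy12
    hdy0 hdy1 hdy2 hy hDy12 hxy.symm hyz (by grind) (by grind)
  have hcz : c s(z0, x0) = c s(z0, y0) := h.color_eq_of_pendant_path hzz1 hz12
    hdz0 hdz1 hdz2 hz hDz12 hxz.symm hyz.symm (by grind) (by grind)
  exact h.not_monochromatic_triangle hxy hxz hyz hx hy hz hdx0.le hdy0.le hdz0.le
    ⟨by rwa [Sym2.eq_swap], by rwa [Sym2.eq_swap, Sym2.eq_swap (a := y0)]⟩
end

section
/- For every integer m ≥ 1 there exists a connected simple graph G with exactly 8m edges such that every valid doubling-coloring (D, c) of G satisfies |D| ≥ m, and G admits a valid doubling-coloring (D, c) with |D| = m; in particular D_lir(G) = m = |E(G)|/8. -/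
/-!
Attach a `K₄` by a single edge to a root vertex. If no edge meeting this `K₄` is doubled, then its
three vertices of degree 3 have pairwise distinct numbers of edges of each color. One of these
numbers is 0 or 3, so one of the vertices is monochromatic, and this forces a conflict at the vertex
joined to the root. Hence every valid doubling-coloring doubles an edge meeting the `K₄`.

Adding a leaf at the root gives a gadget with 8 edges, and doubling a single edge of its `K₄` is
enough. Gluing `m` gadgets at the root gives `8 m` edges and `m` pairwise disjoint sets of edges,
each of which contains a doubled one. The root has weighted degree `2 m ≠ 1` in the color of its
edges, while each of its neighbors has weighted degree 1 in that color, so the colorings of the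
gadgets fit together.
-/

open Finset
open scoped Classical

section WeightedDegree

variable {V W : Type*} [Fintype V] [Fintype W] {G : SimpleGraph V} {H : SimpleGraph W}
  {D : Finset (Sym2 V)} {c : Sym2 V → Fin 2}

theorem wdeg_eq_sum_of_neighborSet_eq [DecidableEq V] {s : Finset V} {v : V}
    (hs : G.neighborSet v = s) (i : Fin 2) :
    wdeg G D c i v = ∑ w ∈ s with c s(v, w) = i, if s(v, w) ∈ D then 2 else 1 := by
  have hadj (w : V) : G.Adj v w ↔ w ∈ s := by
    rw [← SimpleGraph.mem_neighborSet, hs, mem_coe]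
  unfold wdeg
  refine Finset.sum_congr ?_ fun w _ => by congr
  ext w
  simp only [mem_filter, mem_univ, true_and, hadj]

theorem wdeg_eq_sum_of_forall_notMem {s : Finset V} {v : V}
    (hs : G.neighborSet v = s) (hD : ∀ e ∈ D, v ∉ e) (i : Fin 2) :
    wdeg G D c i v = ∑ w ∈ s, if c s(v, w) = i then 1 else 0 := by
  rw [wdeg_eq_sum_of_neighborSet_eq hs, ← sum_filter]
  refine sum_congr rfl fun w _ => if_neg fun hw => hD _ hw (Sym2.mem_mk_left v w)

theorem wdeg_zero_add_wdeg_one [DecidableRel G.Adj] {v : V} (hD : ∀ e ∈ D, v ∉ e) :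
    wdeg G D c 0 v + wdeg G D c 1 v = G.degree v := by
  have hs : G.neighborSet v = G.neighborFinset v := (G.coe_neighborFinset v).symm
  rw [wdeg_eq_sum_of_forall_notMem hs hD, wdeg_eq_sum_of_forall_notMem hs hD,
    ← sum_add_distrib, ← G.card_neighborFinset_eq_degree, card_eq_sum_ones]
  refine sum_congr rfl fun w _ => ?_
  obtain h | h : c s(v, w) = 0 ∨ c s(v, w) = 1 := by omega
  all_goals simp [h]

-- Both colors sum to the common degree, so a conflict in one color is a conflict in the other.
theorem ValidDC.wdeg_ne_of_degree_eq [DecidableRel G.Adj] (h : ValidDC G D c) {u v : V}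
    (huv : G.Adj u v) (hdeg : G.degree u = G.degree v) (hu : ∀ e ∈ D, u ∉ e)
    (hv : ∀ e ∈ D, v ∉ e) (i : Fin 2) : wdeg G D c i u ≠ wdeg G D c i v := by
  have hsum_u := wdeg_zero_add_wdeg_one (G := G) (c := c) hu
  have hsum_v := wdeg_zero_add_wdeg_one (G := G) (c := c) hv
  have hne := h.2 u v huv
  obtain hc | hc : c s(u, v) = 0 ∨ c s(u, v) = 1 := by omega
  all_goals
    rw [hc] at hne
    obtain rfl | rfl : i = 0 ∨ i = 1 := by omega
    all_goals omega

theorem wdeg_eq_wdeg_of_neighborSet_eq_image {D' : Finset (Sym2 W)} {c' : Sym2 W → Fin 2}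
    (φ : V ↪ W) {v : V} (hadj : H.neighborSet (φ v) = φ '' G.neighborSet v)
    (hD : ∀ u, s(φ v, φ u) ∈ D' ↔ s(v, u) ∈ D) (hc : ∀ u, c' s(φ v, φ u) = c s(v, u))
    (i : Fin 2) : wdeg H D' c' i (φ v) = wdeg G D c i v := by
  have hH : H.neighborSet (φ v) = ((G.neighborFinset v).map φ : Finset W) := by
    rw [hadj, coe_map, SimpleGraph.coe_neighborFinset]
  rw [wdeg_eq_sum_of_neighborSet_eq hH,
    wdeg_eq_sum_of_neighborSet_eq (G.coe_neighborFinset v).symm, sum_filter, sum_filter, sum_map]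
  simp only [hD, hc]

theorem ValidDC.of_iso (h : ValidDC G D c) (φ : G ≃g H) :
    ValidDC H (D.map φ.toEquiv.toEmbedding.sym2Map) (fun e => c (e.map φ.symm)) := by
  have hwdeg (i : Fin 2) (v : V) :
      wdeg H (D.map φ.toEquiv.toEmbedding.sym2Map) (fun e => c (e.map φ.symm)) i (φ v) =
        wdeg G D c i v :=
    wdeg_eq_wdeg_of_neighborSet_eq_image φ.toEquiv.toEmbedding
      φ.image_neighborSet.symm
      (fun u => mem_map' φ.toEquiv.toEmbedding.sym2Map (a := s(v, u)))
      (fun u => by simp) i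
  constructor
  · rw [coe_map]
    rintro _ ⟨e, he, rfl⟩
    exact φ.map_mem_edgeSet_iff.2 (h.1 he)
  · intro x y hxy
    obtain ⟨u, rfl⟩ := φ.surjective x
    obtain ⟨v, rfl⟩ := φ.surjective y
    rw [hwdeg, hwdeg]
    simpa using h.2 u v (φ.map_adj_iff.1 hxy)

end WeightedDegree

section PendantK4

variable {V : Type*} {G : SimpleGraph V} {r x u v w : V}

/-- A copy of `K₄` on `x, u, v, w` whose only edge to the rest of `G` is `xr`. Distinctness of
`x, u, v, w` is not a field, since no vertex lies in its own neighborhood. -/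
structure IsPendantK4 (G : SimpleGraph V) (r x u v w : V) : Prop where
  root_notMem : r ∉ ({u, v, w} : Set V)
  neighborSet_apex : G.neighborSet x = {r, u, v, w}
  neighborSet_fst : G.neighborSet u = {x, v, w}
  neighborSet_snd : G.neighborSet v = {x, u, w}
  neighborSet_trd : G.neighborSet w = {x, u, v}

namespace IsPendantK4

theorem swap_fst_snd (h : IsPendantK4 G r x u v w) : IsPendantK4 G r x v u w where
  root_notMem := by rw [Set.insert_comm]; exact h.root_notMem
  neighborSet_apex := by rw [h.neighborSet_apex, Set.insert_comm u]
  neighborSet_fst := h.neighborSet_snd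
  neighborSet_snd := h.neighborSet_fst
  neighborSet_trd := by rw [h.neighborSet_trd, Set.pair_comm]

theorem swap_snd_trd (h : IsPendantK4 G r x u v w) : IsPendantK4 G r x u w v where
  root_notMem := by rw [Set.pair_comm]; exact h.root_notMem
  neighborSet_apex := by rw [h.neighborSet_apex, Set.pair_comm v]
  neighborSet_fst := by rw [h.neighborSet_fst, Set.pair_comm]
  neighborSet_snd := h.neighborSet_trd
  neighborSet_trd := h.neighborSet_snd

theorem adj_apex_fst (h : IsPendantK4 G r x u v w) : G.Adj x u := by
  simp [← SimpleGraph.mem_neighborSet, h.neighborSet_apex]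

theorem adj_fst_snd (h : IsPendantK4 G r x u v w) : G.Adj u v := by
  simp [← SimpleGraph.mem_neighborSet, h.neighborSet_fst]

theorem adj_fst_trd (h : IsPendantK4 G r x u v w) : G.Adj u w :=
  h.swap_snd_trd.adj_fst_snd

theorem adj_snd_trd (h : IsPendantK4 G r x u v w) : G.Adj v w :=
  h.swap_fst_snd.adj_fst_trd

theorem adj_apex_trd (h : IsPendantK4 G r x u v w) : G.Adj x w :=
  h.swap_snd_trd.swap_fst_snd.adj_apex_fst

variable [Fintype V] {D : Finset (Sym2 V)} {c : Sym2 V → Fin 2}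

theorem degree_fst [DecidableRel G.Adj] (h : IsPendantK4 G r x u v w) : G.degree u = 3 := by
  have hs : G.neighborFinset u = {x, v, w} := by
    apply Finset.coe_injective
    simp [h.neighborSet_fst]
  have hxv := h.swap_fst_snd.adj_apex_fst.ne
  rw [← G.card_neighborFinset_eq_degree, hs,
    card_eq_three.2 ⟨x, v, w, hxv, h.adj_apex_trd.ne, h.adj_snd_trd.ne, rfl⟩]

theorem wdeg_apex (h : IsPendantK4 G r x u v w) (hx : ∀ e ∈ D, x ∉ e) (i : Fin 2) :
    wdeg G D c i x = (if c s(x, r) = i then 1 else 0) + ((if c s(x, u) = i then 1 else 0) +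
      ((if c s(x, v) = i then 1 else 0) + if c s(x, w) = i then 1 else 0)) := by
  have hs : G.neighborSet x = ({r, u, v, w} : Finset V) := by simp [h.neighborSet_apex]
  have hr : r ∉ ({u, v, w} : Finset V) := by simpa using h.root_notMem
  have hu : u ∉ ({v, w} : Finset V) := by simp [h.adj_fst_snd.ne, h.adj_fst_trd.ne]
  rw [wdeg_eq_sum_of_forall_notMem hs hx, sum_insert hr, sum_insert hu,
    sum_pair h.adj_snd_trd.ne]

theorem wdeg_fst (h : IsPendantK4 G r x u v w) (hu : ∀ e ∈ D, u ∉ e) (i : Fin 2) :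
    wdeg G D c i u = (if c s(x, u) = i then 1 else 0) +
      ((if c s(u, v) = i then 1 else 0) + if c s(u, w) = i then 1 else 0) := by
  have hs : G.neighborSet u = ({x, v, w} : Finset V) := by simp [h.neighborSet_fst]
  have hx : x ∉ ({v, w} : Finset V) := by
    simp [h.swap_fst_snd.adj_apex_fst.ne, h.adj_apex_trd.ne]
  rw [wdeg_eq_sum_of_forall_notMem hs hu, sum_insert hx, sum_pair h.adj_snd_trd.ne,
    Sym2.eq_swap (a := u) (b := x)]

/-
If all three edges at `u` have color `i`, then `v` has two edges of color `i` and `w` only `uw`. So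
`xu`, `xv` have color `i` while `xw`, `vw` have the other color. Either color of `xr` then gives a
conflict at `x`: with `u` in color `i`, or with `w` in the other color.
-/
theorem wdeg_fst_ne_three_of_lt (h : IsPendantK4 G r x u v w) (hval : ValidDC G D c)
    (hx : ∀ e ∈ D, x ∉ e) (hu : ∀ e ∈ D, u ∉ e) (hv : ∀ e ∈ D, v ∉ e) (hw : ∀ e ∈ D, w ∉ e)
    {i : Fin 2} (hlt : wdeg G D c i w < wdeg G D c i v) : wdeg G D c i u ≠ 3 := by
  intro hmono
  have hwdeg_x := h.wdeg_apex (c := c) hx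
  have hwdeg_u := h.wdeg_fst (c := c) hu
  have hwdeg_v := h.swap_fst_snd.wdeg_fst (c := c) hv
  have hwdeg_w := h.swap_snd_trd.swap_fst_snd.wdeg_fst (c := c) hw
  rw [Sym2.eq_swap (a := v) (b := u)] at hwdeg_v
  rw [Sym2.eq_swap (a := w) (b := u), Sym2.eq_swap (a := w) (b := v)] at hwdeg_w
  obtain ⟨hxu, huv, huw⟩ : c s(x, u) = i ∧ c s(u, v) = i ∧ c s(u, w) = i := by
    have := hwdeg_u i
    split_ifs at this <;> omega
  have hv_ne : wdeg G D c i v ≠ 3 := by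
    have := hval.2 u v h.adj_fst_snd
    rw [huv] at this
    omega
  obtain ⟨hxv, hvw, hxw⟩ : c s(x, v) = i ∧ c s(v, w) ≠ i ∧ c s(x, w) ≠ i := by
    have hcount_v := hwdeg_v i
    have hcount_w := hwdeg_w i
    simp only [huv, huw, if_true] at hcount_v hcount_w
    split_ifs at hcount_v hcount_w <;> omega
  by_cases hxr : c s(x, r) = i
  · have hx_three : wdeg G D c i x = 3 := by simp [hwdeg_x, hxr, hxu, hxv, hxw]
    have := hval.2 x u h.adj_apex_fst
    rw [hxu] at this
    omega
  · have hvw_eq : c s(v, w) = c s(x, w) := by omega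
    have hxr_eq : c s(x, r) = c s(x, w) := by omega
    apply hval.2 x w h.adj_apex_trd
    simp [hwdeg_x, hwdeg_w, hxr_eq, hvw_eq, hxu, hxv, huw, hxw.symm]

theorem wdeg_fst_ne_three (h : IsPendantK4 G r x u v w) (hval : ValidDC G D c)
    (hx : ∀ e ∈ D, x ∉ e) (hu : ∀ e ∈ D, u ∉ e) (hv : ∀ e ∈ D, v ∉ e) (hw : ∀ e ∈ D, w ∉ e)
    (i : Fin 2) : wdeg G D c i u ≠ 3 := by
  have hdeg : G.degree v = G.degree w :=
    h.swap_fst_snd.degree_fst.trans h.swap_snd_trd.swap_fst_snd.degree_fst.symm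
  rcases (hval.wdeg_ne_of_degree_eq h.adj_snd_trd hdeg hv hw i).lt_or_gt with hlt | hlt
  · exact h.swap_snd_trd.wdeg_fst_ne_three_of_lt hval hx hu hw hv hlt
  · exact h.wdeg_fst_ne_three_of_lt hval hx hu hv hw hlt

/-
Otherwise `u`, `v`, `w` have degree 3 and pairwise distinct numbers of edges of color `0`; since
none of them is monochromatic, these three numbers would all lie in `{1, 2}`.
-/
theorem exists_mem_of_validDC (h : IsPendantK4 G r x u v w) (hval : ValidDC G D c) :
    ∃ e ∈ D, x ∈ e ∨ u ∈ e ∨ v ∈ e ∨ w ∈ e := by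
  by_contra! hD
  have hx (e) (he : e ∈ D) := (hD e he).1
  have hu (e) (he : e ∈ D) := (hD e he).2.1
  have hv (e) (he : e ∈ D) := (hD e he).2.2.1
  have hw (e) (he : e ∈ D) := (hD e he).2.2.2
  have h_v := h.swap_fst_snd
  have h_w := h.swap_snd_trd.swap_fst_snd
  have hsum_u := (wdeg_zero_add_wdeg_one (c := c) hu).trans h.degree_fst
  have hsum_v := (wdeg_zero_add_wdeg_one (c := c) hv).trans h_v.degree_fst
  have hsum_w := (wdeg_zero_add_wdeg_one (c := c) hw).trans h_w.degree_fst
  have hne_u := h.wdeg_fst_ne_three hval hx hu hv hw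
  have hne_v := h_v.wdeg_fst_ne_three hval hx hv hu hw
  have hne_w := h_w.wdeg_fst_ne_three hval hx hw hu hv
  have huv := hval.wdeg_ne_of_degree_eq h.adj_fst_snd
    (h.degree_fst.trans h_v.degree_fst.symm) hu hv 0
  have huw := hval.wdeg_ne_of_degree_eq h.adj_fst_trd
    (h.degree_fst.trans h_w.degree_fst.symm) hu hw 0
  have hvw := hval.wdeg_ne_of_degree_eq h.adj_snd_trd
    (h_v.degree_fst.trans h_w.degree_fst.symm) hv hw 0
  have hne_u₀ := hne_u 0
  have hne_u₁ := hne_u 1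
  have hne_v₀ := hne_v 0
  have hne_v₁ := hne_v 1
  have hne_w₀ := hne_w 0
  have hne_w₁ := hne_w 1
  omega

end IsPendantK4

end PendantK4

section Bouquet

variable {ι α : Type*} {H : SimpleGraph (Option α)}

/-- The `j`-th petal of a bouquet: the embedding of the pointed set `Option α`, with base point
`none`, as the `j`-th summand of the pointed sum `Option (ι × α)`. -/
def petal (j : ι) : Option α ↪ Option (ι × α) :=
  (Function.Embedding.sectR j α).optionMap

/-- The folding map of the pointed sum, a common left inverse of all the petals. -/
def petalFold (v : Option (ι × α)) : Option α :=
  v.map Prod.snd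

/-- The bouquet of `ι` copies of `H`, glued at the vertex `none`. -/
def bouquet (ι : Type*) (H : SimpleGraph (Option α)) : SimpleGraph (Option (ι × α)) :=
  ⨆ j : ι, H.map (petal j)

@[simp]
theorem petal_none (j : ι) : petal j (none : Option α) = none := rfl

@[simp]
theorem petal_some (j : ι) (k : α) : petal j (some k) = some (j, k) := rfl

theorem petal_eq_some_iff {i j : ι} {a : Option α} {k : α} :
    petal i a = some (j, k) ↔ i = j ∧ a = some k := by
  cases a <;> simp

theorem petalFold_petal (j : ι) (a : Option α) : petalFold (petal j a) = a := by
  cases a <;> rfl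

theorem map_petalFold_map_petal (j : ι) (e : Sym2 (Option α)) :
    (e.map (petal j)).map petalFold = e := by
  rw [Sym2.map_map, show petalFold ∘ petal j = id from funext (petalFold_petal j), Sym2.map_id, id]

theorem bouquet_adj {x y : Option (ι × α)} :
    (bouquet ι H).Adj x y ↔ ∃ j a b, H.Adj a b ∧ petal j a = x ∧ petal j b = y := by
  simp only [bouquet, SimpleGraph.iSup_adj, SimpleGraph.map_adj]

theorem neighborSet_bouquet_some (j : ι) (k : α) :
    (bouquet ι H).neighborSet (some (j, k)) = petal j '' H.neighborSet (some k) := by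
  ext y
  simp only [SimpleGraph.mem_neighborSet, bouquet_adj, petal_eq_some_iff, Set.mem_image]
  constructor
  · rintro ⟨_, _, b, hb, ⟨rfl, rfl⟩, rfl⟩
    exact ⟨b, hb, rfl⟩
  · rintro ⟨b, hb, rfl⟩
    exact ⟨j, some k, b, hb, ⟨rfl, rfl⟩, rfl⟩

theorem bouquet_adj_none_some {j : ι} {k : α} :
    (bouquet ι H).Adj none (some (j, k)) ↔ H.Adj none (some k) := by
  rw [SimpleGraph.adj_comm, H.adj_comm, ← SimpleGraph.mem_neighborSet, neighborSet_bouquet_some,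
    ← petal_none j, (petal j).injective.mem_set_image, SimpleGraph.mem_neighborSet]

theorem edgeSet_bouquet : (bouquet ι H).edgeSet =
    (fun p : ι × Sym2 (Option α) => p.2.map (petal p.1)) '' (Set.univ ×ˢ H.edgeSet) := by
  ext e
  simp only [bouquet, SimpleGraph.edgeSet_iSup, SimpleGraph.edgeSet_map, Set.mem_iUnion,
    Set.mem_image, Set.mem_prod, Set.mem_univ, true_and, Prod.exists]
  rfl

theorem exists_some_mem_of_mem_edgeSet {e : Sym2 (Option α)} (he : e ∈ H.edgeSet) :
    ∃ k, some k ∈ e := by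
  induction e with | _ a b
  rcases a with _ | k
  · rcases b with _ | k
    · exact (H.loopless.irrefl none he).elim
    · exact ⟨k, Sym2.mem_mk_right _ _⟩
  · exact ⟨k, Sym2.mem_mk_left _ _⟩

theorem injOn_map_petal : Set.InjOn
    (fun p : ι × Sym2 (Option α) => p.2.map (petal p.1)) (Set.univ ×ˢ H.edgeSet) := by
  rintro ⟨j, e⟩ ⟨-, he⟩ ⟨j', e'⟩ - (heq : e.map (petal j) = e'.map (petal j'))
  obtain rfl : e = e' := by
    rw [← map_petalFold_map_petal j e, heq, map_petalFold_map_petal]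
  obtain ⟨k, hk⟩ := exists_some_mem_of_mem_edgeSet he
  have hmem : some (j, k) ∈ e.map (petal j') := heq ▸ Sym2.mem_map.2 ⟨some k, hk, rfl⟩
  obtain ⟨a, -, ha⟩ := Sym2.mem_map.1 hmem
  rw [(petal_eq_some_iff.1 ha).1]

theorem ncard_edgeSet_bouquet :
    (bouquet ι H).edgeSet.ncard = Nat.card ι * H.edgeSet.ncard := by
  rw [edgeSet_bouquet, injOn_map_petal.ncard_image, Set.ncard_prod, Set.ncard_univ]

theorem petal_eq_of_mem_edgeSet_bouquet {e : Sym2 (Option (ι × α))}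
    (he : e ∈ (bouquet ι H).edgeSet) {j j' : ι} {k k' : α} (hj : some (j, k) ∈ e)
    (hj' : some (j', k') ∈ e) : j = j' := by
  rw [edgeSet_bouquet] at he
  obtain ⟨⟨i, e⟩, -, rfl⟩ := he
  obtain ⟨a, -, ha⟩ := Sym2.mem_map.1 hj
  obtain ⟨b, -, hb⟩ := Sym2.mem_map.1 hj'
  exact (petal_eq_some_iff.1 ha).1.symm.trans (petal_eq_some_iff.1 hb).1

theorem connected_bouquet (hH : H.Connected) : (bouquet ι H).Connected := by
  refine SimpleGraph.connected_iff_exists_forall_reachable _ |>.2 ⟨none, ?_⟩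
  rintro (_ | ⟨j, k⟩)
  · exact .rfl
  · let petalHom : H →g bouquet ι H :=
      ⟨petal j, fun {a b} hab => bouquet_adj.2 ⟨j, a, b, hab, rfl, rfl⟩⟩
    exact (hH.preconnected none (some k)).map petalHom

theorem IsPendantK4.bouquet_some {x u v w : α}
    (h : IsPendantK4 H none (some x) (some u) (some v) (some w)) (j : ι) :
    IsPendantK4 (bouquet ι H) none (some (j, x)) (some (j, u)) (some (j, v)) (some (j, w)) where
  root_notMem := by simp
  neighborSet_apex := by simp [neighborSet_bouquet_some, h.neighborSet_apex, Set.image_insert_eq]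
  neighborSet_fst := by simp [neighborSet_bouquet_some, h.neighborSet_fst, Set.image_insert_eq]
  neighborSet_snd := by simp [neighborSet_bouquet_some, h.neighborSet_snd, Set.image_insert_eq]
  neighborSet_trd := by simp [neighborSet_bouquet_some, h.neighborSet_trd, Set.image_insert_eq]

variable [Fintype ι]

theorem IsPendantK4.card_le_card_of_validDC_bouquet [Fintype α] {x u v w : α}
    (h : IsPendantK4 H none (some x) (some u) (some v) (some w))
    {D : Finset (Sym2 (Option (ι × α)))} {c : Sym2 (Option (ι × α)) → Fin 2}
    (hval : ValidDC (bouquet ι H) D c) : Fintype.card ι ≤ #D := by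
  have hpetal (j : ι) : ∃ e ∈ D, ∃ k, some (j, k) ∈ e := by
    obtain ⟨e, he, hmem⟩ := (h.bouquet_some j).exists_mem_of_validDC hval
    exact ⟨e, he, by tauto⟩
  choose e he k hk using hpetal
  have hinj : Function.Injective fun j => (⟨e j, he j⟩ : D) := by
    intro j j' hjj'
    have heq : e j = e j' := congrArg Subtype.val hjj'
    exact petal_eq_of_mem_edgeSet_bouquet (hval.1 (he j)) (hk j) (heq ▸ hk j')
  simpa using Fintype.card_le_of_injective _ hinj

/-- The edges of a bouquet over `D`: the copies of the edges in `D` in all the petals. -/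
noncomputable def bouquetEdges (ι : Type*) [Fintype ι] (D : Finset (Sym2 (Option α))) :
    Finset (Sym2 (Option (ι × α))) :=
  (univ ×ˢ D).image fun p => p.2.map (petal p.1)

variable {D : Finset (Sym2 (Option α))} {c : Sym2 (Option α) → Fin 2}

theorem map_petal_mem_bouquetEdges {j : ι} {e : Sym2 (Option α)} :
    e.map (petal j) ∈ bouquetEdges ι D ↔ e ∈ D := by
  simp only [bouquetEdges, mem_image, mem_product, mem_univ, true_and, Prod.exists]
  constructor
  · rintro ⟨j', e', he', heq⟩
    rwa [← map_petalFold_map_petal j e, ← heq, map_petalFold_map_petal]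
  · exact fun he => ⟨j, e, he, rfl⟩

theorem card_bouquetEdges (hD : ↑D ⊆ H.edgeSet) :
    #(bouquetEdges ι D) = Fintype.card ι * #D := by
  rw [bouquetEdges, card_image_of_injOn, card_product, card_univ]
  refine injOn_map_petal.mono (s₂ := Set.univ ×ˢ H.edgeSet) ?_
  rw [coe_product, coe_univ]
  exact Set.prod_mono_right hD

variable [Fintype α]

theorem wdeg_bouquet_some (i : Fin 2) (j : ι) (k : α) :
    wdeg (bouquet ι H) (bouquetEdges ι D) (fun e => c (e.map petalFold)) i (some (j, k)) =
      wdeg H D c i (some k) :=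
  wdeg_eq_wdeg_of_neighborSet_eq_image (petal j) (neighborSet_bouquet_some j k)
    (fun a => map_petal_mem_bouquetEdges (e := s(some k, a)))
    (fun a => congrArg c (map_petalFold_map_petal j s(some k, a))) i

theorem wdeg_bouquet_none (i : Fin 2) :
    wdeg (bouquet ι H) (bouquetEdges ι D) (fun e => c (e.map petalFold)) i none =
      Fintype.card ι * wdeg H D c i none := by
  have hmem (j : ι) (k : α) : s(none, some (j, k)) ∈ bouquetEdges ι D ↔ s(none, some k) ∈ D :=
    map_petal_mem_bouquetEdges (e := s(none, some k))
  have hcolor (j : ι) (k : α) : s(none, some (j, k)).map petalFold = s(none, some k) := rfl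
  simp only [wdeg, sum_filter, Fintype.sum_option, Fintype.sum_prod_type, SimpleGraph.irrefl,
    bouquet_adj_none_some, hmem, hcolor, false_and, if_false, zero_add]
  rw [← card_univ, ← smul_eq_mul, ← sum_const]
  congr!

theorem ValidDC.bouquet (h : ValidDC H D c)
    (hroot : ∀ k, H.Adj none (some k) →
      Fintype.card ι * wdeg H D c (c s(none, some k)) none ≠
        wdeg H D c (c s(none, some k)) (some k)) :
    ValidDC (bouquet ι H) (bouquetEdges ι D) (fun e => c (e.map petalFold)) := by
  constructor
  · rw [bouquetEdges, coe_image, edgeSet_bouquet, coe_product, coe_univ]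
    exact Set.image_mono (Set.prod_mono_right h.1)
  · intro x y hxy
    obtain ⟨j, a, b, hab, rfl, rfl⟩ := bouquet_adj.1 hxy
    have hcolor : c (s(petal j a, petal j b).map petalFold) = c s(a, b) :=
      congrArg c (map_petalFold_map_petal j s(a, b))
    simp only [hcolor]
    rcases a with _ | k <;> rcases b with _ | l
    · exact (H.loopless.irrefl none hab).elim
    · rw [petal_none, petal_some, wdeg_bouquet_none, wdeg_bouquet_some]
      exact hroot l hab
    · rw [petal_none, petal_some, wdeg_bouquet_none, wdeg_bouquet_some, Sym2.eq_swap]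
      exact (hroot k hab.symm).symm
    · rw [petal_some, petal_some, wdeg_bouquet_some, wdeg_bouquet_some]
      exact h.2 _ _ hab

end Bouquet

section Gadget

/-- The edges of the gadget: a `K₄` on the labels `1, 2, 3, 4`, with `1` joined to the root `none`,
and a leaf `0` at the root. -/
def gadgetEdges : Finset (Sym2 (Option (Fin 5))) :=
  {s(none, some 0), s(none, some 1), s(some 1, some 2), s(some 1, some 3), s(some 1, some 4),
    s(some 2, some 3), s(some 2, some 4), s(some 3, some 4)}

/-- The gadget whose bouquets have doubling number one eighth of their number of edges. -/
def gadget : SimpleGraph (Option (Fin 5)) :=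
  SimpleGraph.fromEdgeSet gadgetEdges

/-- The single doubled edge of the gadget. -/
def gadgetDoubling : Finset (Sym2 (Option (Fin 5))) :=
  {s(some 1, some 2)}

/-- The coloring of the gadget whose color `1` is a triangle with a pendant edge. With
`gadgetDoubling` the vertices `1, 2, 3, 4` get the weighted degrees `4, 3, 2, 1` in color `1`, and
`1, 1, 1, 2` in color `0`. -/
def gadgetColoring (e : Sym2 (Option (Fin 5))) : Fin 2 :=
  if e ∈ ({s(some 1, some 2), s(some 1, some 3), s(some 1, some 4), s(some 2, some 3)} :
    Finset (Sym2 (Option (Fin 5)))) then 1 else 0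

instance : DecidableRel gadget.Adj := fun a b =>
  inferInstanceAs (Decidable (s(a, b) ∈ (gadgetEdges : Set (Sym2 (Option (Fin 5)))) ∧ a ≠ b))

theorem edgeSet_gadget : gadget.edgeSet = gadgetEdges := by
  rw [gadget, SimpleGraph.edgeSet_fromEdgeSet, sdiff_eq_left, Set.disjoint_left]
  have hdiag : ∀ e ∈ gadgetEdges, ¬ e.IsDiag := by decide
  exact hdiag

theorem ncard_edgeSet_gadget : gadget.edgeSet.ncard = 8 := by
  rw [edgeSet_gadget, Set.ncard_coe_finset]
  rfl

theorem connected_gadget : gadget.Connected := by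
  refine SimpleGraph.connected_iff_exists_forall_reachable _ |>.2 ⟨none, fun v => ?_⟩
  have hapex : gadget.Adj none (some 1) := by decide
  have hdist : ∀ v, v = none ∨ gadget.Adj none v ∨ gadget.Adj (some 1) v := by decide
  rcases hdist v with rfl | hv | hv
  · exact .rfl
  · exact hv.reachable
  · exact hapex.reachable.trans hv.reachable

theorem isPendantK4_gadget : IsPendantK4 gadget none (some 1) (some 2) (some 3) (some 4) where
  root_notMem := by simp
  neighborSet_apex := by ext v; revert v; decide
  neighborSet_fst := by ext v; revert v; decide
  neighborSet_snd := by ext v; revert v; decide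
  neighborSet_trd := by ext v; revert v; decide

theorem wdeg_gadget (i : Fin 2) (v : Option (Fin 5)) :
    wdeg gadget gadgetDoubling gadgetColoring i v =
      ∑ w ∈ gadget.neighborFinset v with gadgetColoring s(v, w) = i,
        if s(v, w) ∈ gadgetDoubling then 2 else 1 :=
  wdeg_eq_sum_of_neighborSet_eq (gadget.coe_neighborFinset v).symm i

theorem validDC_gadget : ValidDC gadget gadgetDoubling gadgetColoring := by
  constructor
  · rw [edgeSet_gadget, coe_subset]
    decide
  · simp only [wdeg_gadget]
    decide

theorem wdeg_gadget_zero_root : wdeg gadget gadgetDoubling gadgetColoring 0 none = 2 := by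
  rw [wdeg_gadget]
  decide

theorem gadgetColoring_eq_zero_and_wdeg_eq_one_of_adj_root :
    ∀ k, gadget.Adj none (some k) → gadgetColoring s(none, some k) = 0 ∧
      wdeg gadget gadgetDoubling gadgetColoring 0 (some k) = 1 := by
  simp only [wdeg_gadget]
  decide

theorem validDC_bouquet_gadget (ι : Type*) [Fintype ι] :
    ValidDC (bouquet ι gadget) (bouquetEdges ι gadgetDoubling)
      (fun e => gadgetColoring (e.map petalFold)) := by
  refine validDC_gadget.bouquet fun k hk => ?_
  obtain ⟨hcolor, hwdeg⟩ := gadgetColoring_eq_zero_and_wdeg_eq_one_of_adj_root k hk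
  rw [hcolor, hwdeg, wdeg_gadget_zero_root]
  omega

end Gadget

/-- For every `m ≥ 1` there is a connected graph with exactly `8m` edges whose every
valid doubling-coloring doubles at least `m` edges, and which admits a valid
doubling-coloring with exactly `m` doubled edges; i.e. `D_lir(G) = m = |E(G)|/8`. -/
theorem Dlir_one_eighth_edges (m : ℕ) (hm : 1 ≤ m) :
    ∃ (n : ℕ) (G : SimpleGraph (Fin n)), G.Connected ∧
      G.edgeSet.ncard = 8 * m ∧
      (∀ (D : Finset (Sym2 (Fin n))) (c : Sym2 (Fin n) → Fin 2),
        ValidDC G D c → m ≤ D.card) ∧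
      (∃ (D : Finset (Sym2 (Fin n))) (c : Sym2 (Fin n) → Fin 2),
        ValidDC G D c ∧ D.card = m) := by
  let B := bouquet (Fin m) gadget
  let φ : B ≃g B.map (Fintype.equivFin _).toEmbedding := SimpleGraph.Iso.map (Fintype.equivFin _) B
  refine ⟨_, _, φ.connected_iff.1 (connected_bouquet connected_gadget), ?_, ?_, ?_⟩
  · calc _ = B.edgeSet.ncard := (Nat.card_congr φ.mapEdgeSet).symm
      _ = 8 * m := by
        rw [ncard_edgeSet_bouquet, ncard_edgeSet_gadget, Nat.card_fin, mul_comm]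
  · intro D c h
    simpa using isPendantK4_gadget.card_le_card_of_validDC_bouquet (h.of_iso φ.symm)
  · refine ⟨_, _, (validDC_bouquet_gadget (Fin m)).of_iso φ, ?_⟩
    rw [card_map, card_bouquetEdges validDC_gadget.1, gadgetDoubling, card_singleton, mul_one,
      Fintype.card_fin]
end
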